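/- Suppose (w0, w1) is a smooth solution of the radial tt* system (case 4a) on (0, ∞) such that w0(r) → 0 and w1(r) → 0 as r → ∞ and 2·w0(r)/ln r → 3 and 2·w1(r)/ln r → 1 as r → 0⁺ (the vertex case V1, (γ0, γ1) = (3, 1)). Then, with s = ln r, the fine structure near r = 0 holds: 2·w0(r) − 3·ln r − ln P3(s) → 0 and 2·w0(r) + 2·w1(r) − 4·ln r − ln P4(s) → 0 as r → 0⁺, where γ is the Euler–Mascheroni constant, ζ(3) = Σ_{n≥1} 1/n³, P3(s) = −(4/3)(s − ln 4)³ − 4γ(s − ln 4)² − 4γ²(s − ln 4) − ζ(3)/24 − (4/3)γ³, and P4(s) = (4/3)(s − ln 4)⁴ + (16/3)γ(s − ln 4)³ + 8γ²(s − ln 4)² + ((16γ³)/3 − ζ(3)/12)(s − ln 4) − γ·ζ(3)/12 + (4/3)γ⁴. -/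

import Mathlib

open Real Filter

/-- The radial tt* system (case 4a). -/
def IsRadialTTStar (w0 w1 : ℝ → ℝ) : Prop :=
  ∀ r : ℝ, 0 < r →
    (1/2) * deriv (deriv w0) r + (1/(2*r)) * deriv w0 r
        = Real.exp (4 * w0 r) - Real.exp (2 * w1 r - 2 * w0 r) ∧
    (1/2) * deriv (deriv w1) r + (1/(2*r)) * deriv w1 r
        = Real.exp (2 * w1 r - 2 * w0 r) - Real.exp (-(4 * w1 r))

/-- `ζ(3) = Σ_{n ≥ 1} 1/n³`. -/
noncomputable def zetaThree : ℝ := ∑' n : ℕ, 1 / ((n : ℝ) + 1)^3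

/-- The cubic polynomial `P3` of the V1 fine structure (in `s = ln r`). -/
noncomputable def P3V1 (s : ℝ) : ℝ :=
  -(4/3) * (s - Real.log 4)^3 - 4 * Real.eulerMascheroniConstant * (s - Real.log 4)^2
    - 4 * Real.eulerMascheroniConstant^2 * (s - Real.log 4)
    - zetaThree / 24 - (4/3) * Real.eulerMascheroniConstant^3

/-- The quartic polynomial `P4` of the V1 fine structure (in `s = ln r`). -/
noncomputable def P4V1 (s : ℝ) : ℝ :=
  (4/3) * (s - Real.log 4)^4 + (16/3) * Real.eulerMascheroniConstant * (s - Real.log 4)^3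
    + 8 * Real.eulerMascheroniConstant^2 * (s - Real.log 4)^2
    + ((16 * Real.eulerMascheroniConstant^3)/3 - zetaThree / 12) * (s - Real.log 4)
    - Real.eulerMascheroniConstant * zetaThree / 12 + (4/3) * Real.eulerMascheroniConstant^4

/-!
In the variable `s = log r` the system is the flatness condition of a connection in light-cone
variables `a`, `b` with `s = (a + b) / 2`. A positive flat section exists by compactness of the cone
of initial directions, and its limit as `b → -∞` is a chain of positive functions with
`H i (a) = -(d/da) H (i - 1) (a)` and `H 4 (a) = exp (4 a) H 0 (a)`. The Laplace transform `m` of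
`H 0` satisfies `m (z + 4) = z ^ 4 m z` and is log-convex, so by the Bohr–Mollerup theorem it is,
up to elementary factors, a fourth power of `Γ (z / 4)`; expanding at the pole `z = 0` gives the
polynomial asymptotics of `H 0` at `-∞`, which is where `γ` and `ζ(3)` come from. Finally the
`a ↔ b` symmetry of the connection relates one component of the section to its own reflection. On
the pairs `a = s + x`, `b = s - x` this is, up to exponentially small terms, a polynomial identity
in `x`, and its coefficients determine `2 w₀ - 3 s` and `2 w₀ + 2 w₁ - 4 s`.
-/

open scoped Topology

section LinearODE

variable {E : Type*} [NormedAddCommGroup E] [NormedSpace ℝ E]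

/-- The `n`-th term of the Picard series solving `y' = B y`, `y t₀ = v`. -/
noncomputable def picardTerm (B : ℝ → E →L[ℝ] E) (t₀ : ℝ) (v : E) : ℕ → ℝ → E
  | 0 => fun _ => v
  | n + 1 => fun t => ∫ τ in t₀..t, B τ (picardTerm B t₀ v n τ)

variable {B : ℝ → E →L[ℝ] E} {t₀ : ℝ} {v : E}

lemma continuous_picardTerm (hB : Continuous B) (n : ℕ) : Continuous (picardTerm B t₀ v n) := by
  induction n with
  | zero => exact continuous_const
  | succ n ih =>
    exact intervalIntegral.continuous_primitive
      (fun _ _ => (hB.clm_apply ih).intervalIntegrable _ _) t₀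

lemma hasDerivAt_picardTerm_succ [CompleteSpace E] (hB : Continuous B) (n : ℕ) (t : ℝ) :
    HasDerivAt (picardTerm B t₀ v (n + 1)) (B t (picardTerm B t₀ v n t)) t :=
  (hB.clm_apply (continuous_picardTerm hB n)).integral_hasStrictDerivAt t₀ t |>.hasDerivAt

lemma norm_picardTerm_le {T K : ℝ} (hK0 : 0 ≤ K)
    (hK : ∀ t, |t - t₀| ≤ T → ‖B t‖ ≤ K) (n : ℕ) {t : ℝ} (ht : |t - t₀| ≤ T) :
    ‖picardTerm B t₀ v n t‖ ≤ ‖v‖ * K ^ n * |t - t₀| ^ n / n.factorial := by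
  induction n generalizing t with
  | zero => simp [picardTerm]
  | succ n ih =>
    have pointwise : ∀ τ ∈ Set.uIoc t₀ t,
        ‖B τ (picardTerm B t₀ v n τ)‖ ≤ ‖v‖ * K ^ (n + 1) / n.factorial * |τ - t₀| ^ n := by
      intro τ hτ
      have hτT : |τ - t₀| ≤ T :=
        (Set.abs_sub_left_of_mem_uIcc (Set.uIoc_subset_uIcc hτ)).trans ht
      calc ‖B τ (picardTerm B t₀ v n τ)‖ ≤ ‖B τ‖ * ‖picardTerm B t₀ v n τ‖ := (B τ).le_opNorm _
        _ ≤ K * (‖v‖ * K ^ n * |τ - t₀| ^ n / n.factorial) := by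
            gcongr
            exacts [hK τ hτT, ih hτT]
        _ = _ := by ring
    calc ‖picardTerm B t₀ v (n + 1) t‖
        = ‖∫ τ in Set.uIoc t₀ t, B τ (picardTerm B t₀ v n τ)‖ :=
          intervalIntegral.norm_intervalIntegral_eq _ _ _ _
      _ ≤ ∫ τ in Set.uIoc t₀ t, ‖v‖ * K ^ (n + 1) / n.factorial * |τ - t₀| ^ n :=
          MeasureTheory.norm_integral_le_of_norm_le
            (Continuous.integrableOn_uIoc (by fun_prop))
            (MeasureTheory.ae_restrict_of_forall_mem measurableSet_uIoc pointwise)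
      _ = _ := by
          rw [MeasureTheory.integral_const_mul, integral_pow_abs_sub_uIoc, Nat.factorial_succ]
          push_cast
          field_simp

lemma hasDerivAt_tsum_picardTerm [CompleteSpace E] (hB : Continuous B) (t : ℝ) :
    HasDerivAt (fun s => ∑' n, picardTerm B t₀ v n s) (B t (∑' n, picardTerm B t₀ v n t)) t := by
  set T := |t - t₀| + 1
  have mem_iff : ∀ {s}, s ∈ Metric.ball t₀ T ↔ |s - t₀| < T := by simp [Real.dist_eq]
  have ht : t ∈ Metric.ball t₀ T := mem_iff.2 (lt_add_one _)
  obtain ⟨K, hK⟩ := (isCompact_closedBall t₀ T).exists_bound_of_continuousOn hB.continuousOn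
  have hK : ∀ s, |s - t₀| ≤ T → ‖B s‖ ≤ K := fun s hs => hK s (by simpa [Real.dist_eq] using hs)
  have hK0 : 0 ≤ K := (norm_nonneg _).trans (hK t (mem_iff.1 ht).le)
  set u : ℕ → ℝ := fun n => ‖v‖ * ((K * T) ^ n / n.factorial)
  have term_le : ∀ n s, |s - t₀| < T → ‖picardTerm B t₀ v n s‖ ≤ u n := fun n s hs =>
    calc _ ≤ ‖v‖ * K ^ n * |s - t₀| ^ n / n.factorial := norm_picardTerm_le hK0 hK n hs.le
      _ ≤ ‖v‖ * K ^ n * T ^ n / n.factorial := by gcongr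
      _ = u n := by simp only [u, mul_pow]; ring
  have hu : Summable u := (Real.summable_pow_div_factorial (K * T)).mul_left _
  have summable_term : ∀ s, |s - t₀| < T → Summable fun n => picardTerm B t₀ v n s :=
    fun s hs => Summable.of_norm_bounded hu fun n => term_le n s hs
  have hasDeriv_tail := hasDerivAt_tsum_of_isPreconnected (hu.mul_left K) Metric.isOpen_ball
    (convex_ball t₀ T).isPreconnected (fun n s _ => hasDerivAt_picardTerm_succ (v := v) hB n s)
    (fun n s hs => ((B s).le_opNorm _).trans <| mul_le_mul (hK s (mem_iff.1 hs).le)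
      (term_le n s (mem_iff.1 hs)) (norm_nonneg _) hK0)
    ht ((summable_nat_add_iff 1).2 (summable_term t (mem_iff.1 ht))) ht
  rw [← (B t).map_tsum (summable_term t (mem_iff.1 ht))] at hasDeriv_tail
  refine (hasDeriv_tail.const_add v).congr_of_eventuallyEq ?_
  filter_upwards [Metric.isOpen_ball.mem_nhds ht] with s hs
  rw [(summable_term s (mem_iff.1 hs)).tsum_eq_zero_add]
  rfl

theorem exists_hasDerivAt_clm_apply [CompleteSpace E] (hB : Continuous B) (t₀ : ℝ) (v : E) :
    ∃ y : ℝ → E, y t₀ = v ∧ ∀ t, HasDerivAt y (B t (y t)) t := by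
  refine ⟨fun t => ∑' n, picardTerm B t₀ v n t, ?_, hasDerivAt_tsum_picardTerm hB⟩
  refine (tsum_eq_single 0 fun n hn => ?_).trans rfl
  obtain ⟨m, rfl⟩ := Nat.exists_eq_succ_of_ne_zero hn
  exact intervalIntegral.integral_same

lemma norm_le_gronwallBound_of_norm_deriv_le {f f' : ℝ → E} {t₀ t δ K ε : ℝ}
    (hf : ∀ s, HasDerivAt f (f' s) s) (h0 : ‖f t₀‖ ≤ δ)
    (bound : ∀ s ∈ Set.uIcc t₀ t, ‖f' s‖ ≤ K * ‖f s‖ + ε) :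
    ‖f t‖ ≤ gronwallBound δ K ε |t - t₀| := by
  rcases le_total t₀ t with h | h
  · rw [abs_of_nonneg (sub_nonneg.2 h)]
    rw [Set.uIcc_of_le h] at bound
    exact norm_le_gronwallBound_of_norm_deriv_right_le
      (fun s _ => (hf s).continuousAt.continuousWithinAt) (fun s _ => (hf s).hasDerivWithinAt) h0
      (fun s hs => bound s (Set.Ico_subset_Icc_self hs)) t ⟨h, le_rfl⟩
  · rw [abs_sub_comm, abs_of_nonneg (sub_nonneg.2 h)]
    rw [Set.uIcc_of_ge h] at bound
    have reflected : ∀ s, HasDerivAt (fun s => f (-s)) (-f' (-s)) s := fun s => by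
      simpa [Function.comp_def] using (hf (-s)).scomp s (hasDerivAt_neg s)
    have := norm_le_gronwallBound_of_norm_deriv_right_le (a := -t₀) (b := -t) (δ := δ) (K := K)
      (ε := ε) (fun s _ => (reflected s).continuousAt.continuousWithinAt)
      (fun s _ => (reflected s).hasDerivWithinAt) (by simpa using h0)
      (fun s hs => by
        rw [norm_neg]
        exact bound (-s) ⟨by linarith [hs.2], by linarith [hs.1]⟩)
      (-t) ⟨neg_le_neg h, le_rfl⟩
    simpa [sub_eq_add_neg, add_comm] using this

lemma eq_of_hasDerivAt_clm_apply {y z : ℝ → E} (hB : Continuous B)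
    (hy : ∀ t, HasDerivAt y (B t (y t)) t) (hz : ∀ t, HasDerivAt z (B t (z t)) t)
    (h0 : y t₀ = z t₀) : y = z := by
  funext t
  obtain ⟨K, hK⟩ := (isCompact_uIcc (a := t₀) (b := t)).exists_bound_of_continuousOn
    hB.continuousOn
  have := norm_le_gronwallBound_of_norm_deriv_le (t₀ := t₀) (t := t) (δ := 0) (ε := 0) (K := K)
    (fun s => (hy s).sub (hz s)) (by simp [h0]) (fun s hs => by
      rw [← map_sub, add_zero]
      exact ((B s).le_opNorm _).trans (mul_le_mul_of_nonneg_right (hK s hs) (norm_nonneg _)))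
  rw [gronwallBound_ε0_δ0] at this
  exact sub_eq_zero.1 (norm_le_zero_iff.1 this)

lemma gronwallBound_mul (c δ K ε x : ℝ) :
    gronwallBound (c * δ) K (c * ε) x = c * gronwallBound δ K ε x := by
  unfold gronwallBound
  split_ifs <;> ring

end LinearODE

section UniformEstimates

variable {F : Type*} [NormedAddCommGroup F] {G G' : ℝ → ℝ → F} {S : Set ℝ}

lemma eventually_forall_norm_sub_le (hG : Continuous fun p : ℝ × ℝ => G p.1 p.2)
    (hS : IsCompact S) (a : ℝ) {η : ℝ} (hη : 0 < η) :
    ∀ᶠ a' in 𝓝 a, ∀ b ∈ S, ‖G a' b - G a b‖ ≤ η := by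
  refine hS.eventually_forall_of_forall_eventually fun b _ => ?_
  have lim : Tendsto (fun p : ℝ × ℝ => ‖G p.1 p.2 - G a p.2‖) (𝓝 (a, b)) (𝓝 0) :=
    ((hG.sub (hG.comp (continuous_const.prodMk continuous_snd))).norm).tendsto' _ _ (by simp)
  exact lim.eventually_le_const hη

lemma eventually_forall_norm_sub_sub_smul_le [NormedSpace ℝ F]
    (hG' : Continuous fun p : ℝ × ℝ => G' p.1 p.2)
    (hG : ∀ a b, HasDerivAt (fun a => G a b) (G' a b) a) (hS : IsCompact S) (a : ℝ) {η : ℝ}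
    (hη : 0 < η) :
    ∀ᶠ a' in 𝓝 a, ∀ b ∈ S, ‖G a' b - G a b - (a' - a) • G' a b‖ ≤ η * ‖a' - a‖ := by
  obtain ⟨d, hd, hball⟩ :=
    Metric.eventually_nhds_iff_ball.1 (eventually_forall_norm_sub_le hG' hS a hη)
  filter_upwards [Metric.ball_mem_nhds a hd] with a' ha' b hb
  have key := (convex_ball a d).norm_image_sub_le_of_norm_hasDerivWithin_le (𝕜 := ℝ)
    (f := fun x => G x b - x • G' a b) (f' := fun x => G' x b - (1 : ℝ) • G' a b)
    (fun x _ => ((hG x b).sub ((hasDerivAt_id x).smul_const (G' a b))).hasDerivWithinAt)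
    (fun x hx => by simpa using hball x hx b hb) (Metric.mem_ball_self hd) ha'
  convert key using 2
  rw [sub_smul]
  abel

end UniformEstimates

/-- A flat linear connection `∂_a y = A y`, `∂_b y = B y` on the trivial bundle `ℝ² × E`; `A'` is
`∂_b A` and `B'` is `∂_a B`. -/
structure FlatConnection (E : Type*) [NormedAddCommGroup E] [NormedSpace ℝ E] where
  (A B A' B' : ℝ → ℝ → E →L[ℝ] E)
  continuous_A : Continuous fun p : ℝ × ℝ => A p.1 p.2
  continuous_B : Continuous fun p : ℝ × ℝ => B p.1 p.2
  continuous_B' : Continuous fun p : ℝ × ℝ => B' p.1 p.2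
  hasDerivAt_A : ∀ a b, HasDerivAt (fun b => A a b) (A' a b) b
  hasDerivAt_B : ∀ a b, HasDerivAt (fun a => B a b) (B' a b) a
  curvature_eq_zero : ∀ a b v, A' a b v + A a b (B a b v) = B' a b v + B a b (A a b v)

namespace FlatConnection

variable {E : Type*} [NormedAddCommGroup E] [NormedSpace ℝ E] (C : FlatConnection E)

/-- `y` is a global flat section. -/
structure IsSection (y : ℝ → ℝ → E) : Prop where
  hasDerivAt_left : ∀ a b, HasDerivAt (fun a => y a b) (C.A a b (y a b)) a
  hasDerivAt_right : ∀ a b, HasDerivAt (fun b => y a b) (C.B a b (y a b)) b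

variable {C}

section Existence

variable {y : ℝ → ℝ → E} {b₀ : ℝ}

lemma norm_deriv_defect_le (a : ℝ) {a' b K R η : ℝ} (hK : ‖C.B a' b‖ ≤ K) (hy : ‖y a b‖ ≤ R)
    (hAy : ‖C.A a b (y a b)‖ ≤ R) (hη : 0 ≤ η) (hB : ‖C.B a' b - C.B a b‖ ≤ η)
    (hB' : ‖C.B a' b - C.B a b - (a' - a) • C.B' a b‖ ≤ η * ‖a' - a‖) :
    ‖C.B a' b (y a' b) - C.B a b (y a b)
        - (a' - a) • (C.A' a b (y a b) + C.A a b (C.B a b (y a b)))‖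
      ≤ K * ‖y a' b - y a b - (a' - a) • C.A a b (y a b)‖ + η * ‖a' - a‖ * (2 * R) := by
  set h := a' - a
  have decomposition : C.B a' b (y a' b) - C.B a b (y a b)
        - h • (C.A' a b (y a b) + C.A a b (C.B a b (y a b)))
      = C.B a' b (y a' b - y a b - h • C.A a b (y a b))
        + ((C.B a' b - C.B a b - h • C.B' a b) (y a b)
          + h • (C.B a' b - C.B a b) (C.A a b (y a b))) := by
    rw [C.curvature_eq_zero]
    simp only [map_sub, map_smul, sub_apply, smul_apply, smul_sub, smul_add]
    abel
  have first : ‖(C.B a' b - C.B a b - h • C.B' a b) (y a b)‖ ≤ η * ‖h‖ * R :=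
    (ContinuousLinearMap.le_opNorm _ _).trans (by gcongr)
  have second : ‖h • (C.B a' b - C.B a b) (C.A a b (y a b))‖ ≤ ‖h‖ * (η * R) := by
    rw [norm_smul]
    gcongr
    exact (ContinuousLinearMap.le_opNorm _ _).trans (by gcongr)
  rw [decomposition]
  refine (norm_add_le _ _).trans (add_le_add ?_ ?_)
  · exact (ContinuousLinearMap.le_opNorm _ _).trans (by gcongr)
  · exact (norm_add_le _ _).trans (by linarith)

/-- By flatness the defect `y a' b - y a b - (a' - a) • A a b (y a b)` solves the `b`-equation up
to `o(a' - a)`, so it is `o(a' - a)` for every `b` once it is for `b = b₀`. -/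
lemma hasDerivAt_left_of_right (hy : ∀ a b, HasDerivAt (fun b => y a b) (C.B a b (y a b)) b)
    (hy₀ : ∀ a, HasDerivAt (fun a => y a b₀) (C.A a b₀ (y a b₀)) a) (a b : ℝ) :
    HasDerivAt (fun a => y a b) (C.A a b (y a b)) a := by
  have cpt : IsCompact (Set.uIcc b₀ b) := isCompact_uIcc
  have cont_y : Continuous (y a) := continuous_iff_continuousAt.2 fun b => (hy a b).continuousAt
  have cont_Ay : Continuous fun b => C.A a b (y a b) :=
    (C.continuous_A.comp (Continuous.prodMk_right a)).clm_apply cont_y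
  obtain ⟨R₁, hR₁⟩ := cpt.exists_bound_of_continuousOn cont_y.continuousOn
  obtain ⟨R₂, hR₂⟩ := cpt.exists_bound_of_continuousOn cont_Ay.continuousOn
  obtain ⟨K, hK⟩ := cpt.exists_bound_of_continuousOn
    (C.continuous_B.comp (Continuous.prodMk_right a)).continuousOn
  set R := max R₁ R₂
  have hR : 0 ≤ R := (norm_nonneg _).trans ((hR₁ b Set.right_mem_uIcc).trans (le_max_left _ _))
  have hK0 : 0 ≤ K + 1 := by linarith [(norm_nonneg _).trans (hK b Set.right_mem_uIcc)]
  set M := gronwallBound 1 (K + 1) (2 * R) |b - b₀|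
  have hM : 0 < M := one_pos.trans_le <| (gronwallBound_x0 1 (K + 1) (2 * R)).ge.trans <|
    gronwallBound_mono zero_le_one (by positivity) hK0 (abs_nonneg _)
  rw [hasDerivAt_iff_isLittleO, Asymptotics.isLittleO_iff]
  intro e he
  have hη : 0 < e / M := by positivity
  filter_upwards [Asymptotics.isLittleO_iff.1 (hasDerivAt_iff_isLittleO.1 (hy₀ a)) hη,
    eventually_forall_norm_sub_le C.continuous_B cpt a hη,
    eventually_forall_norm_sub_le C.continuous_B cpt a one_pos,
    eventually_forall_norm_sub_sub_smul_le C.continuous_B' C.hasDerivAt_B cpt a hη]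
    with a' initial hB hB1 hB'
  have defect_le := norm_le_gronwallBound_of_norm_deriv_le
    (fun t => ((hy a' t).sub (hy a t)).sub
      (((C.hasDerivAt_A a t).clm_apply (hy a t)).const_smul (a' - a)))
    (initial.trans_eq (mul_one _).symm)
    (fun t ht => norm_deriv_defect_le a
      (norm_le_norm_add_const_of_dist_le (dist_eq_norm (C.B a' t) (C.B a t) ▸ hB1 t ht) |>.trans
        (add_le_add_left (hK t ht) 1))
      ((hR₁ t ht).trans (le_max_left _ _)) ((hR₂ t ht).trans (le_max_right _ _)) hη.le (hB t ht)
      (hB' t ht))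
  refine defect_le.trans_eq ?_
  rw [gronwallBound_mul, mul_right_comm, div_mul_cancel₀ _ hM.ne']

theorem exists_isSection [CompleteSpace E] (C : FlatConnection E) (a₀ b₀ : ℝ) (c : E) :
    ∃ y, C.IsSection y ∧ y a₀ b₀ = c := by
  obtain ⟨φ, hφ₀, hφ⟩ := exists_hasDerivAt_clm_apply
    (C.continuous_A.comp (Continuous.prodMk_left b₀)) a₀ c
  choose y hy₀ hy using fun a => exists_hasDerivAt_clm_apply
    (C.continuous_B.comp (Continuous.prodMk_right a)) b₀ (φ a)
  have hyφ : (fun a => y a b₀) = φ := funext hy₀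
  refine ⟨y, ⟨hasDerivAt_left_of_right (b₀ := b₀) hy fun a => ?_, hy⟩, by rw [hy₀, hφ₀]⟩
  rw [hyφ, hy₀]
  exact hφ a

end Existence

namespace IsSection

variable {y z : ℝ → ℝ → E}

lemma const_smul (hy : C.IsSection y) (r : ℝ) : C.IsSection fun a b => r • y a b where
  hasDerivAt_left a b := by
    rw [map_smul]
    exact (hy.hasDerivAt_left a b).const_smul r
  hasDerivAt_right a b := by
    rw [map_smul]
    exact (hy.hasDerivAt_right a b).const_smul r

lemma add (hy : C.IsSection y) (hz : C.IsSection z) :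
    C.IsSection fun a b => y a b + z a b where
  hasDerivAt_left a b := by
    rw [map_add]
    exact (hy.hasDerivAt_left a b).add (hz.hasDerivAt_left a b)
  hasDerivAt_right a b := by
    rw [map_add]
    exact (hy.hasDerivAt_right a b).add (hz.hasDerivAt_right a b)

lemma sum {ι : Type*} {s : Finset ι} {y : ι → ℝ → ℝ → E} (hy : ∀ i ∈ s, C.IsSection (y i)) :
    C.IsSection fun a b => ∑ i ∈ s, y i a b where
  hasDerivAt_left a b := by
    rw [map_sum]
    exact HasDerivAt.fun_sum fun i hi => (hy i hi).hasDerivAt_left a b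
  hasDerivAt_right a b := by
    rw [map_sum]
    exact HasDerivAt.fun_sum fun i hi => (hy i hi).hasDerivAt_right a b

theorem eq_of_eq (hy : C.IsSection y) (hz : C.IsSection z) {a₀ b₀ : ℝ}
    (h : y a₀ b₀ = z a₀ b₀) : y = z := by
  have hb₀ : (fun a => y a b₀) = fun a => z a b₀ :=
    eq_of_hasDerivAt_clm_apply (C.continuous_A.comp (Continuous.prodMk_left b₀))
      (fun a => hy.hasDerivAt_left a b₀) (fun a => hz.hasDerivAt_left a b₀) h
  funext a
  exact eq_of_hasDerivAt_clm_apply (C.continuous_B.comp (Continuous.prodMk_right a))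
    (fun b => hy.hasDerivAt_right a b) (fun b => hz.hasDerivAt_right a b) (congrFun hb₀ a)

end IsSection

end FlatConnection

section Positivity

/-- A nonnegative flat section is a limit of suitably normalized sections that are positive on the
quadrants `a, b ≤ n`; compactness of the simplex provides the limit. -/
theorem FlatConnection.exists_nonneg_isSection {ι : Type*} [Fintype ι] [Nonempty ι]
    (C : FlatConnection (ι → ℝ))
    (pos : ∀ y (t₀ : ℝ), C.IsSection y → (∀ i, 0 < y t₀ t₀ i) →
      ∀ a b, a ≤ t₀ → b ≤ t₀ → ∀ i, 0 < y a b i) :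
    ∃ y, C.IsSection y ∧ (∀ a b i, 0 ≤ y a b i) ∧ ∑ i, y 0 0 i = 1 := by
  classical
  choose Y hY hY0 using C.exists_isSection 0 0
  choose z hz hz1 using fun n : ℕ => C.exists_isSection n n 1
  have z_pos : ∀ n : ℕ, ∀ a b : ℝ, a ≤ n → b ≤ n → ∀ i, 0 < z n a b i := fun n =>
    pos (z n) n (hz n) fun i => by simp [hz1]
  set S : ℕ → ℝ := fun n => ∑ i, z n 0 0 i
  have z0_pos : ∀ n i, 0 < z n 0 0 i := fun n => z_pos n 0 0 n.cast_nonneg n.cast_nonneg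
  have S_pos : ∀ n, 0 < S n := fun n =>
    Finset.sum_pos (fun i _ => z0_pos n i) Finset.univ_nonempty
  set c : ℕ → ι → ℝ := fun n => (S n)⁻¹ • z n 0 0
  have c_mem : ∀ n, c n ∈ stdSimplex ℝ ι := fun n =>
    ⟨fun i => mul_nonneg (inv_nonneg.2 (S_pos n).le) (z0_pos n i).le, by
      simp only [c, Pi.smul_apply, ← Finset.smul_sum]
      exact inv_mul_cancel₀ (S_pos n).ne'⟩
  obtain ⟨c₀, hc₀, φ, hφ, lim⟩ := (isCompact_stdSimplex ℝ ι).tendsto_subseq c_mem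
  have Y_eq_sum : ∀ d, Y d = fun a b => ∑ j, d j • Y (Pi.single j 1) a b := fun d =>
    (hY d).eq_of_eq (.sum fun j _ => (hY _).const_smul (d j)) (a₀ := 0) (b₀ := 0) <| by
      simp only [hY0]
      exact pi_eq_sum_univ' d
  have Y_c : ∀ n, Y (c n) = fun a b => (S n)⁻¹ • z n a b := fun n =>
    (hY _).eq_of_eq ((hz n).const_smul _) (hY0 _)
  refine ⟨Y c₀, hY c₀, fun a b i => ?_, by rw [hY0]; exact hc₀.2⟩
  have lim_Y : Tendsto (fun n => Y (c (φ n)) a b i) atTop (𝓝 (Y c₀ a b i)) := by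
    simp_rw [Y_eq_sum (c _), Y_eq_sum c₀, Finset.sum_apply, Pi.smul_apply, smul_eq_mul]
    exact tendsto_finsetSum _ fun j _ => ((tendsto_pi_nhds.1 lim) j).mul_const _
  refine ge_of_tendsto lim_Y ?_
  filter_upwards [tendsto_natCast_atTop_atTop.eventually_ge_atTop (max a b)] with n hn
  have hn : max a b ≤ (φ n : ℝ) := hn.trans (Nat.cast_le.2 (hφ.id_le n))
  rw [Y_c]
  exact mul_nonneg (inv_nonneg.2 (S_pos _).le)
    (z_pos _ a b ((le_max_left _ _).trans hn) ((le_max_right _ _).trans hn) i).le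

lemma pos_of_hasDerivAt_neg_mul {ι : Type*} [Finite ι] {χ c : ι → ℝ → ℝ} {σ : ι → ι} {t₀ t : ℝ}
    (hc : ∀ i t, 0 ≤ c i t) (hχ : ∀ i t, HasDerivAt (χ i) (-(c i t * χ (σ i) t)) t)
    (h0 : ∀ i, 0 < χ i t₀) (ht : t ≤ t₀) (i : ι) : 0 < χ i t := by
  by_contra hneg
  set S : Set ℝ := Set.Iic t₀ ∩ ⋃ i, {x | χ i x ≤ 0}
  have cont : ∀ i, Continuous (χ i) := fun i =>
    continuous_iff_continuousAt.2 fun t => (hχ i t).continuousAt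
  have closed : IsClosed S := isClosed_Iic.inter <|
    isClosed_iUnion_of_finite fun i => isClosed_le (cont i) continuous_const
  have bdd : BddAbove S := ⟨t₀, fun x hx => hx.1⟩
  obtain ⟨hm, hmS⟩ := closed.csSup_mem ⟨t, ht, Set.mem_iUnion.2 ⟨i, not_lt.1 hneg⟩⟩ bdd
  set m := sSup S
  obtain ⟨j, hj⟩ := Set.mem_iUnion.1 hmS
  have pos_after : ∀ x, m < x → x ≤ t₀ → ∀ k, 0 < χ k x := by
    intro x hmx hx k
    by_contra hk
    exact hmx.not_ge (le_csSup bdd ⟨hx, Set.mem_iUnion.2 ⟨k, not_lt.1 hk⟩⟩)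
  have anti : AntitoneOn (χ j) (Set.Icc m t₀) := by
    refine antitoneOn_of_hasDerivWithinAt_nonpos (convex_Icc _ _) (cont j).continuousOn
      (fun x _ => (hχ j x).hasDerivWithinAt) fun x hx => ?_
    rw [interior_Icc] at hx
    exact neg_nonpos.2 (mul_nonneg (hc j x) (pos_after x hx.1 hx.2.le (σ j)).le)
  exact (h0 j).not_ge ((anti ⟨le_rfl, hm⟩ ⟨hm, le_rfl⟩ hm).trans hj)

end Positivity

section CyclicToda

variable {n : ℕ} [NeZero n]

/-- The operators `v ↦ c · (v ∘ σ)` on `ι → ℝ`, as a continuous linear function of `c`. -/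
noncomputable def weightedComp {ι : Type*} [Fintype ι] (σ : ι → ι) :
    (ι → ℝ) →L[ℝ] (ι → ℝ) →L[ℝ] (ι → ℝ) :=
  (ContinuousLinearMap.compL ℝ (ι → ℝ) (ι → ℝ) (ι → ℝ)).flip
    (ContinuousLinearMap.pi fun i => ContinuousLinearMap.proj (σ i)) ∘L
      ContinuousLinearMap.mul ℝ (ι → ℝ)

@[simp]
lemma weightedComp_apply {ι : Type*} [Fintype ι] (σ : ι → ι) (c v : ι → ℝ) (i : ι) :
    weightedComp σ c v i = c i * v (σ i) := rfl

lemma hasDerivAt_weightedComp {ι : Type*} [Fintype ι] (σ : ι → ι) {c : ℝ → ι → ℝ} {c' : ι → ℝ}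
    {t : ℝ} (hc : ∀ i, HasDerivAt (fun t => c t i) (c' i) t) :
    HasDerivAt (fun t => weightedComp σ (c t)) (weightedComp σ c') t :=
  (weightedComp σ).hasFDerivAt.comp_hasDerivAt t (hasDerivAt_pi.2 hc)

lemma hasDerivAt_comp_half_add_left {f : ℝ → ℝ} {f' a b : ℝ}
    (h : HasDerivAt f (2 * f') ((a + b) / 2)) : HasDerivAt (fun a => f ((a + b) / 2)) f' a :=
  (h.comp a (((hasDerivAt_id a).add_const b).div_const 2)).congr_deriv (by ring)

lemma hasDerivAt_comp_half_add_right {f : ℝ → ℝ} {f' a b : ℝ}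
    (h : HasDerivAt f (2 * f') ((a + b) / 2)) : HasDerivAt (fun b => f ((a + b) / 2)) f' b := by
  simp_rw [add_comm a] at h ⊢
  exact hasDerivAt_comp_half_add_left h

/-- The spectral weight `e^{nt}` carried by the edge `-1 → 0` of the cyclic quiver. -/
noncomputable def cyclicWeight (i : Fin n) (t : ℝ) : ℝ := if i = 0 then exp (n * t) else 1

/-- The coupling `e^{φ_i - φ_{i-1}}` of the affine Toda equations, with the factor `e^{2ns}` on the
affine root. -/
noncomputable def todaCoupling (φ : Fin n → ℝ → ℝ) (i : Fin n) (s : ℝ) : ℝ :=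
  cyclicWeight i s ^ 2 * exp (φ i s - φ (i - 1) s)

/-- A solution of the affine Toda equations of type `A_{n-1}` in the variable `s = (a + b) / 2`;
`D` is half the derivative of `φ`, that is, `∂_a φ = ∂_b φ`. -/
structure IsCyclicToda (φ D : Fin n → ℝ → ℝ) : Prop where
  hasDerivAt_potential : ∀ i s, HasDerivAt (φ i) (2 * D i s) s
  hasDerivAt_velocity : ∀ i s,
    HasDerivAt (D i) (2 * (todaCoupling φ i s - todaCoupling φ (i + 1) s)) s

/-- The coefficient of `y_{i-1}` in `-∂_b y_i`. -/
noncomputable def backwardCoeff (φ : Fin n → ℝ → ℝ) (i : Fin n) (a b : ℝ) : ℝ :=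
  cyclicWeight i b * exp (φ i ((a + b) / 2) - φ (i - 1) ((a + b) / 2))

lemma cyclicWeight_pos (i : Fin n) (t : ℝ) : 0 < cyclicWeight i t := by
  unfold cyclicWeight
  split_ifs <;> positivity

lemma continuous_cyclicWeight (i : Fin n) : Continuous (cyclicWeight i) := by
  unfold cyclicWeight
  split_ifs <;> fun_prop

lemma backwardCoeff_pos (φ : Fin n → ℝ → ℝ) (i : Fin n) (a b : ℝ) : 0 < backwardCoeff φ i a b :=
  mul_pos (cyclicWeight_pos i b) (exp_pos _)

lemma cyclicWeight_mul_backwardCoeff (φ : Fin n → ℝ → ℝ) (i : Fin n) (a b : ℝ) :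
    cyclicWeight i a * backwardCoeff φ i a b = todaCoupling φ i ((a + b) / 2) := by
  unfold todaCoupling backwardCoeff cyclicWeight
  split_ifs
  · rw [← mul_assoc, ← exp_add, ← exp_nat_mul]
    push_cast
    ring_nf
  · simp

/-- The reflection of a section across the diagonal `a = b`. -/
noncomputable def reflect (φ : Fin n → ℝ → ℝ) (y : ℝ → ℝ → Fin n → ℝ) :
    ℝ → ℝ → Fin n → ℝ :=
  fun a b i => exp (φ i ((a + b) / 2)) * y b a (-1 - i)

lemma cyclicWeight_neg_one_sub (i : Fin n) (t : ℝ) :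
    cyclicWeight (-1 - i) t = cyclicWeight (i + 1) t := by
  have : -1 - i = -(i + 1) := by abel
  simp only [cyclicWeight, this, neg_eq_zero]

namespace IsCyclicToda

variable {φ D : Fin n → ℝ → ℝ} (h : IsCyclicToda φ D)
include h

lemma continuous_potential (i : Fin n) : Continuous (φ i) :=
  continuous_iff_continuousAt.2 fun s => (h.hasDerivAt_potential i s).continuousAt

lemma continuous_velocity (i : Fin n) : Continuous (D i) :=
  continuous_iff_continuousAt.2 fun s => (h.hasDerivAt_velocity i s).continuousAt

lemma hasDerivAt_backwardCoeff (i : Fin n) (a b : ℝ) :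
    HasDerivAt (fun a => backwardCoeff φ i a b)
      (backwardCoeff φ i a b * (D i ((a + b) / 2) - D (i - 1) ((a + b) / 2))) a := by
  have potential := fun i => hasDerivAt_comp_half_add_left (h.hasDerivAt_potential i ((a + b) / 2))
  refine (((potential i).sub (potential (i - 1))).exp.const_mul (cyclicWeight i b)).congr_deriv ?_
  simp only [backwardCoeff, mul_assoc, Pi.sub_apply]

lemma continuous_backwardCoeff (i : Fin n) :
    Continuous fun p : ℝ × ℝ => backwardCoeff φ i p.1 p.2 := by
  have := h.continuous_potential
  have := continuous_cyclicWeight i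
  unfold backwardCoeff
  fun_prop

/-- The flat connection `∂_a y_i = D_i y_i - w_{i+1}(a) y_{i+1}`, `∂_b y_i = -β_i y_{i-1}` whose
zero curvature condition is the affine Toda system. -/
noncomputable def connection : FlatConnection (Fin n → ℝ) where
  A a b := weightedComp id (fun i => D i ((a + b) / 2)) -
    weightedComp (· + 1) (fun i => cyclicWeight (i + 1) a)
  B a b := weightedComp (· - 1) (fun i => -backwardCoeff φ i a b)
  A' a b := weightedComp id fun i =>
    todaCoupling φ i ((a + b) / 2) - todaCoupling φ (i + 1) ((a + b) / 2)
  B' a b := weightedComp (· - 1) fun i =>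
    -(backwardCoeff φ i a b * (D i ((a + b) / 2) - D (i - 1) ((a + b) / 2)))
  continuous_A := by
    have := h.continuous_velocity
    have := continuous_cyclicWeight (n := n)
    fun_prop
  continuous_B := by
    have := h.continuous_backwardCoeff
    fun_prop
  continuous_B' := by
    have := h.continuous_backwardCoeff
    have := h.continuous_velocity
    fun_prop
  hasDerivAt_A a b := (hasDerivAt_weightedComp id fun i =>
    hasDerivAt_comp_half_add_right (h.hasDerivAt_velocity i _)).sub_const _
  hasDerivAt_B a b := hasDerivAt_weightedComp _ fun i => (h.hasDerivAt_backwardCoeff i a b).neg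
  curvature_eq_zero a b v := by
    ext i
    simp only [← cyclicWeight_mul_backwardCoeff, Pi.add_apply, sub_apply, weightedComp_apply,
      Pi.sub_apply, id, sub_add_cancel, add_sub_cancel_right]
    ring

variable {y : ℝ → ℝ → Fin n → ℝ}

lemma hasDerivAt_left (hy : h.connection.IsSection y) (i : Fin n) (a b : ℝ) :
    HasDerivAt (fun a => y a b i)
      (D i ((a + b) / 2) * y a b i - cyclicWeight (i + 1) a * y a b (i + 1)) a :=
  hasDerivAt_pi.1 (hy.hasDerivAt_left a b) i

lemma hasDerivAt_right (hy : h.connection.IsSection y) (i : Fin n) (a b : ℝ) :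
    HasDerivAt (fun b => y a b i) (-(backwardCoeff φ i a b * y a b (i - 1))) b :=
  (hasDerivAt_pi.1 (hy.hasDerivAt_right a b) i).congr_deriv (neg_mul _ _)

/-- In the `a`-direction the gauge factor `e^{-φ_i}` removes the diagonal term. -/
lemma section_pos (hy : h.connection.IsSection y) {t₀ a b : ℝ} (h₀ : ∀ i, 0 < y t₀ t₀ i)
    (ha : a ≤ t₀) (hb : b ≤ t₀) (i : Fin n) : 0 < y a b i := by
  have gauged : ∀ i t, HasDerivAt (fun a => exp (-φ i ((a + t₀) / 2)) * y a t₀ i)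
      (-(cyclicWeight (i + 1) t * exp (φ (i + 1) ((t + t₀) / 2) - φ i ((t + t₀) / 2)) *
        (exp (-φ (i + 1) ((t + t₀) / 2)) * y t t₀ (i + 1)))) t := by
    intro i t
    refine ((hasDerivAt_comp_half_add_left (h.hasDerivAt_potential i _)).fun_neg.exp.fun_mul
      (h.hasDerivAt_left hy i t t₀)).congr_deriv ?_
    rw [sub_eq_add_neg (φ (i + 1) _), exp_add, exp_neg (φ (i + 1) _)]
    field_simp
    ring
  have pos_left : ∀ i, 0 < y a t₀ i := fun i =>
    pos_of_mul_pos_right (pos_of_hasDerivAt_neg_mul (σ := (· + 1))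
      (fun i t => (mul_pos (cyclicWeight_pos (i + 1) t) (exp_pos _)).le) gauged
      (fun i => mul_pos (exp_pos _) (h₀ i)) ha i) (exp_pos _).le
  exact pos_of_hasDerivAt_neg_mul (χ := fun i b => y a b i) (σ := (· - 1))
    (fun i b => (backwardCoeff_pos φ i a b).le) (fun i b => h.hasDerivAt_right hy i a b) pos_left
    hb i

lemma isSection_reflect (hφ : ∀ i s, φ (-1 - i) s = -φ i s) (hy : h.connection.IsSection y) :
    h.connection.IsSection (reflect φ y) where
  hasDerivAt_left a b := by
    refine hasDerivAt_pi.2 fun i => ?_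
    refine ((hasDerivAt_comp_half_add_left (h.hasDerivAt_potential i _)).exp.fun_mul
      (h.hasDerivAt_right hy (-1 - i) b a)).congr_deriv ?_
    have index : -1 - i - 1 = -1 - (i + 1) := by abel
    simp only [connection, backwardCoeff, reflect, add_comm b a, index, hφ,
      cyclicWeight_neg_one_sub, sub_apply, Pi.sub_apply, weightedComp_apply, id, sub_neg_eq_add,
      exp_add, exp_neg]
    field_simp
    ring
  hasDerivAt_right a b := by
    refine hasDerivAt_pi.2 fun i => ?_
    have hD : D (-1 - i) ((a + b) / 2) = -D i ((a + b) / 2) := by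
      have := (h.hasDerivAt_potential (-1 - i) ((a + b) / 2)).unique
        (funext (hφ i) ▸ (h.hasDerivAt_potential i ((a + b) / 2)).fun_neg)
      linarith
    refine ((hasDerivAt_comp_half_add_right (h.hasDerivAt_potential i _)).exp.fun_mul
      (h.hasDerivAt_left hy (-1 - i) b a)).congr_deriv ?_
    have index : -1 - i + 1 = -1 - (i - 1) := by abel
    simp only [connection, backwardCoeff, reflect, add_comm b a, index,
      cyclicWeight_neg_one_sub, weightedComp_apply, sub_add_cancel, hD, exp_sub]
    field_simp
    ring

/-- The section is `y + reflect φ y` for a nonnegative section `y`, `reflect φ` being an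
involution. -/
theorem exists_nonneg_section_eq_reflect (hφ : ∀ i s, φ (-1 - i) s = -φ i s) :
    ∃ y, h.connection.IsSection y ∧ (∀ a b i, 0 ≤ y a b i) ∧ 0 < ∑ i, y 0 0 i ∧
      reflect φ y = y := by
  obtain ⟨y, hy, nonneg, total⟩ :=
    h.connection.exists_nonneg_isSection fun y t₀ hy h₀ a b ha hb => h.section_pos hy h₀ ha hb
  have reflect_nonneg : ∀ a b i, 0 ≤ reflect φ y a b i := fun a b i =>
    mul_nonneg (exp_pos _).le (nonneg b a _)
  refine ⟨fun a b => y a b + reflect φ y a b, hy.add (h.isSection_reflect hφ hy),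
    fun a b i => add_nonneg (nonneg a b i) (reflect_nonneg a b i), ?_, ?_⟩
  · simp only [Pi.add_apply, Finset.sum_add_distrib, total]
    exact add_pos_of_pos_of_nonneg one_pos (Finset.sum_nonneg fun i _ => reflect_nonneg 0 0 i)
  · funext a b i
    simp only [reflect, Pi.add_apply, sub_sub_cancel, hφ, add_comm b a, exp_neg]
    field_simp
    ring

end IsCyclicToda

end CyclicToda

section LimitOfDerivatives

variable {E : Type*} [NormedAddCommGroup E] [NormedSpace ℝ E]
  {κ : Type*} {l : Filter κ} [l.NeBot] {f f' : ℝ → κ → E} {F F' : ℝ → E}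

lemma continuous_of_tendsto_of_norm_deriv_le (hf : ∀ a k, HasDerivAt (f · k) (f' a k) a)
    (bounded : ∀ A, ∃ C, ∀ᶠ k in l, ∀ a, |a| ≤ A → ‖f' a k‖ ≤ C)
    (hF : ∀ a, Tendsto (f a) l (𝓝 (F a))) : Continuous F := by
  refine continuous_iff_continuousAt.2 fun a => ?_
  obtain ⟨C, hC⟩ := bounded (|a| + 1)
  have abs_le_of_mem : ∀ t ∈ Metric.closedBall a 1, |t| ≤ |a| + 1 := fun t ht => by
    linarith [abs_sub_abs_le_abs_sub t a, Real.dist_eq t a ▸ Metric.mem_closedBall.1 ht]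
  have lipschitz : ∀ x ∈ Metric.closedBall a 1, ‖F x - F a‖ ≤ C * ‖x - a‖ := fun x hx =>
    le_of_tendsto ((hF x).sub (hF a)).norm <| hC.mono fun k hk =>
      (convex_closedBall a 1).norm_image_sub_le_of_norm_hasDerivWithin_le
        (fun t _ => (hf t k).hasDerivWithinAt) (fun t ht => hk t (abs_le_of_mem t ht))
        (Metric.mem_closedBall_self zero_le_one) hx
  refine tendsto_iff_norm_sub_tendsto_zero.2 (squeeze_zero' (.of_forall fun _ => norm_nonneg _)
    (eventually_of_mem (Metric.closedBall_mem_nhds a one_pos) lipschitz) ?_)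
  exact Continuous.tendsto' (by fun_prop) _ _ (by simp)

variable [CompleteSpace E] [l.IsCountablyGenerated]

lemma hasDerivAt_of_tendsto_of_norm_deriv_le (hf : ∀ a k, HasDerivAt (f · k) (f' a k) a)
    (hf' : ∀ k, Continuous (f' · k))
    (bounded : ∀ A, ∃ C, ∀ᶠ k in l, ∀ a, |a| ≤ A → ‖f' a k‖ ≤ C)
    (hF : ∀ a, Tendsto (f a) l (𝓝 (F a))) (hF' : ∀ a, Tendsto (f' a) l (𝓝 (F' a)))
    (continuous_F' : Continuous F') (a : ℝ) : HasDerivAt F (F' a) a := by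
  have integral_eq : ∀ a, ∫ t in (0 : ℝ)..a, F' t = F a - F 0 := by
    intro a
    obtain ⟨C, hC⟩ := bounded |a|
    have dominated : Tendsto (fun k => ∫ t in (0 : ℝ)..a, f' t k) l (𝓝 (∫ t in (0 : ℝ)..a, F' t)) :=
      intervalIntegral.tendsto_integral_filter_of_dominated_convergence (fun _ => C)
        (.of_forall fun k => (hf' k).aestronglyMeasurable)
        (hC.mono fun k hk => .of_forall fun t ht => hk t (by
          simpa using Set.abs_sub_left_of_mem_uIcc (Set.uIoc_subset_uIcc ht)))
        intervalIntegrable_const (.of_forall fun t _ => hF' t)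
    simp only [intervalIntegral.integral_eq_sub_of_hasDerivAt (fun t _ => hf t _)
      ((hf' _).intervalIntegrable _ _)] at dominated
    exact tendsto_nhds_unique dominated ((hF a).sub (hF 0))
  have F_eq : F = fun a => F 0 + ∫ t in (0 : ℝ)..a, F' t := by
    funext a
    rw [integral_eq, add_sub_cancel]
  rw [F_eq]
  exact (continuous_F'.integral_hasStrictDerivAt 0 a).hasDerivAt.const_add _

end LimitOfDerivatives

section Boundary

lemma monotoneOn_Iic_of_hasDerivAt_nonneg {f f' : ℝ → ℝ} {t₀ : ℝ}
    (hf : ∀ t, HasDerivAt f (f' t) t) (nonneg : ∀ t ≤ t₀, 0 ≤ f' t) :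
    MonotoneOn f (Set.Iic t₀) :=
  monotoneOn_of_hasDerivWithinAt_nonneg (convex_Iic t₀)
    (fun t _ => (hf t).continuousAt.continuousWithinAt) (fun t _ => (hf t).hasDerivWithinAt)
    fun t ht => nonneg t (interior_subset (s := Set.Iic t₀) ht)

lemma antitoneOn_Iic_of_hasDerivAt_nonpos {f f' : ℝ → ℝ} {t₀ : ℝ}
    (hf : ∀ t, HasDerivAt f (f' t) t) (nonpos : ∀ t ≤ t₀, f' t ≤ 0) :
    AntitoneOn f (Set.Iic t₀) := by
  simpa using (monotoneOn_Iic_of_hasDerivAt_nonneg (fun t => (hf t).fun_neg)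
    fun t ht => neg_nonneg.2 (nonpos t ht)).neg

lemma monotoneOn_Iic_mul_exp {S S' κ κ' : ℝ → ℝ} {t₀ : ℝ} (hS : ∀ t, HasDerivAt S (S' t) t)
    (hκ : ∀ t, HasDerivAt κ (κ' t) t) (le : ∀ t ≤ t₀, -(κ' t * S t) ≤ S' t) :
    MonotoneOn (fun t => S t * exp (κ t)) (Set.Iic t₀) :=
  monotoneOn_Iic_of_hasDerivAt_nonneg (fun t => (hS t).fun_mul (hκ t).exp) fun t ht => by
    have : S' t * exp (κ t) + S t * (exp (κ t) * κ' t) = (S' t + κ' t * S t) * exp (κ t) := by ring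
    rw [this]
    exact mul_nonneg (by linarith [le t ht]) (exp_pos _).le

lemma eventually_abs_comp_half_add_le {f : ℝ → ℝ} (lim : Tendsto f atBot (𝓝 0)) (A : ℝ) :
    ∀ᶠ b in atBot, ∀ a, |a| ≤ A → |f ((a + b) / 2)| ≤ 1 := by
  obtain ⟨s₀, hs₀⟩ := eventually_atBot.1 (lim.eventually (Metric.closedBall_mem_nhds 0 one_pos))
  filter_upwards [eventually_le_atBot (2 * s₀ - A)] with b hb a ha
  simpa using hs₀ ((a + b) / 2) (by linarith [le_abs_self a])

variable {n : ℕ} [NeZero n]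

/-- A nonnegative solution of `H_i' = -w_{i+1} H_{i+1}`, the equation satisfied by the limit of a
flat section as `b → -∞`. For the component `0` it reads `(-d/da)^n H_0 = e^{na} H_0`. -/
structure IsCyclicChain (H : ℝ → Fin n → ℝ) : Prop where
  nonneg : ∀ a i, 0 ≤ H a i
  hasDerivAt : ∀ a i, HasDerivAt (H · i) (-(cyclicWeight (i + 1) a * H a (i + 1))) a

lemma cyclicWeight_le {i : Fin n} {a A : ℝ} (ha : |a| ≤ A) : cyclicWeight i a ≤ exp (n * A) := by
  unfold cyclicWeight
  split_ifs
  · have := (le_abs_self a).trans ha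
    gcongr
  · have := (abs_nonneg a).trans ha
    exact one_le_exp (by positivity)

lemma exists_eventually_abs_deriv_left_le {D : Fin n → ℝ → ℝ} {y : ℝ → ℝ → Fin n → ℝ}
    (nonneg : ∀ a b i, 0 ≤ y a b i) (lim : ∀ i, Tendsto (D i) atBot (𝓝 0))
    (bounded : ∀ A, ∃ C, ∀ᶠ b in atBot, ∀ a, |a| ≤ A → ∀ i, y a b i ≤ C) (i : Fin n) (A : ℝ) :
    ∃ C, ∀ᶠ b in atBot, ∀ a, |a| ≤ A →
      ‖D i ((a + b) / 2) * y a b i - cyclicWeight (i + 1) a * y a b (i + 1)‖ ≤ C := by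
  obtain ⟨C, hC⟩ := bounded A
  refine ⟨1 * C + exp (n * A) * C, ?_⟩
  filter_upwards [hC, eventually_abs_comp_half_add_le (lim i) A] with b y_le D_le a ha
  have abs_y_le : ∀ j, |y a b j| ≤ C := fun j =>
    (abs_of_nonneg (nonneg a b j)).trans_le (y_le a ha j)
  have weight_le : |cyclicWeight (i + 1) a| ≤ exp (n * A) :=
    (abs_of_pos (cyclicWeight_pos _ a)).trans_le (cyclicWeight_le ha)
  rw [norm_eq_abs]
  refine (abs_sub _ _).trans ?_
  rw [abs_mul, abs_mul]
  gcongr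
  exacts [D_le a ha, abs_y_le i, abs_y_le (i + 1)]

namespace IsCyclicToda

variable {φ D : Fin n → ℝ → ℝ} (h : IsCyclicToda φ D) {y : ℝ → ℝ → Fin n → ℝ}
  (hy : h.connection.IsSection y) (nonneg : ∀ a b i, 0 ≤ y a b i)
include hy nonneg

lemma antitone_section (a : ℝ) (i : Fin n) : Antitone fun b => y a b i :=
  antitone_of_hasDerivAt_nonpos (h.hasDerivAt_right hy i a) fun b =>
    neg_nonpos.2 (mul_nonneg (backwardCoeff_pos φ i a b).le (nonneg a b _))

/-- The factor `e^κ` compensates the decrease of `∑ i, y a b i` in `b`. -/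
lemma exists_section_le {κ κ' : ℝ → ℝ → ℝ} {s₀ m : ℝ}
    (hκ : ∀ a b, HasDerivAt (κ a) (κ' a b) b) (continuous_κ : ∀ b, Continuous fun a => κ a b)
    (le_κ' : ∀ a b, a + b ≤ 2 * s₀ → ∑ i, backwardCoeff φ i a b ≤ κ' a b)
    (le_κ : ∀ a b, a + b ≤ 2 * s₀ → m ≤ κ a b) (A : ℝ) :
    ∃ C, ∀ a, |a| ≤ A → ∀ b ≤ 2 * s₀ - A, ∀ i, y a b i ≤ C := by
  set S : ℝ → ℝ → ℝ := fun a b => ∑ i, y a b i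
  have le_S : ∀ a b i, y a b i ≤ S a b := fun a b i =>
    Finset.single_le_sum (fun j _ => nonneg a b j) (Finset.mem_univ i)
  have monotone : ∀ a, MonotoneOn (fun b => S a b * exp (κ a b)) (Set.Iic (2 * s₀ - a)) := by
    intro a
    refine monotoneOn_Iic_mul_exp
      (fun b => HasDerivAt.fun_sum fun i _ => h.hasDerivAt_right hy i a b) (hκ a) fun b hb => ?_
    rw [Finset.sum_neg_distrib, neg_le_neg_iff]
    calc ∑ i, backwardCoeff φ i a b * y a b (i - 1)
        ≤ ∑ i, backwardCoeff φ i a b * S a b := Finset.sum_le_sum fun i _ =>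
          mul_le_mul_of_nonneg_left (le_S a b _) (backwardCoeff_pos φ i a b).le
      _ = (∑ i, backwardCoeff φ i a b) * S a b := (Finset.sum_mul ..).symm
      _ ≤ κ' a b * S a b := mul_le_mul_of_nonneg_right (le_κ' a b (by linarith))
          (Finset.sum_nonneg fun i _ => nonneg a b i)
  have continuous_S : Continuous fun a => S a (2 * s₀ - A) :=
    continuous_finsetSum _ fun i _ =>
      continuous_iff_continuousAt.2 fun a => (h.hasDerivAt_left hy i a _).continuousAt
  obtain ⟨C, hC⟩ := (isCompact_Icc (a := -A) (b := A)).exists_bound_of_continuousOn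
    (continuous_S.mul (continuous_κ (2 * s₀ - A)).rexp).continuousOn
  refine ⟨C * exp (-m), fun a ha b hb i => ?_⟩
  have a_le : a ≤ A := (le_abs_self a).trans ha
  have bound : S a b * exp m ≤ C := calc
    S a b * exp m ≤ S a b * exp (κ a b) := by
      have := le_κ a b (by linarith)
      have : 0 ≤ S a b := (nonneg a b 0).trans (le_S a b 0)
      gcongr
    _ ≤ S a (2 * s₀ - A) * exp (κ a (2 * s₀ - A)) :=
      monotone a (Set.mem_Iic.2 (by linarith)) (Set.mem_Iic.2 (by linarith)) hb
    _ ≤ C := (le_abs_self _).trans (hC a (abs_le.1 ha))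
  rw [exp_neg, ← div_eq_mul_inv, le_div_iff₀ (exp_pos m)]
  exact (mul_le_mul_of_nonneg_right (le_S a b i) (exp_pos m).le).trans bound

theorem exists_tendsto_section (lim : ∀ i, Tendsto (D i) atBot (𝓝 0))
    (bounded : ∀ A, ∃ C, ∀ᶠ b in atBot, ∀ a, |a| ≤ A → ∀ i, y a b i ≤ C) :
    ∃ H, IsCyclicChain H ∧ ∀ a i, Tendsto (fun b => y a b i) atBot (𝓝 (H a i)) := by
  have converges : ∀ a i, ∃ z, Tendsto (fun b => y a b i) atBot (𝓝 z) := fun a i => by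
    obtain ⟨C, hC⟩ := bounded |a|
    obtain ⟨b₀, hb₀⟩ := eventually_atBot.1 hC
    have bddAbove : BddAbove (Set.range fun b => y a b i) := ⟨C, Set.forall_mem_range.2 fun b =>
      (h.antitone_section hy nonneg a i (min_le_left b b₀)).trans
        (hb₀ _ (min_le_right b b₀) a le_rfl i)⟩
    exact ⟨_, tendsto_atBot_ciSup (h.antitone_section hy nonneg a i) bddAbove⟩
  choose H hH using converges
  have continuous_y : ∀ b i, Continuous fun a => y a b i := fun b i =>
    continuous_iff_continuousAt.2 fun a => (h.hasDerivAt_left hy i a b).continuousAt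
  have bounded' := exists_eventually_abs_deriv_left_le nonneg lim bounded
  have continuous_H : ∀ i, Continuous (H · i) := fun i =>
    continuous_of_tendsto_of_norm_deriv_le (fun a b => h.hasDerivAt_left hy i a b) (bounded' i)
      fun a => hH a i
  have tendsto_deriv : ∀ i a, Tendsto (fun b =>
      D i ((a + b) / 2) * y a b i - cyclicWeight (i + 1) a * y a b (i + 1)) atBot
        (𝓝 (-(cyclicWeight (i + 1) a * H a (i + 1)))) := fun i a => by
    have half : Tendsto (fun b : ℝ => (a + b) / 2) atBot atBot :=
      (tendsto_atBot_add_const_left _ a tendsto_id).atBot_div_const two_pos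
    simpa using (((lim i).comp half).mul (hH a i)).sub ((hH a (i + 1)).const_mul _)
  refine ⟨H, ⟨fun a i => ge_of_tendsto' (hH a i) fun b => nonneg a b i, fun a i => ?_⟩, hH⟩
  have := continuous_cyclicWeight (i + 1)
  have := h.continuous_velocity
  exact hasDerivAt_of_tendsto_of_norm_deriv_le (fun a b => h.hasDerivAt_left hy i a b)
    (fun b => by fun_prop) (bounded' i) (fun a => hH a i) (tendsto_deriv i) (by fun_prop) a

end IsCyclicToda

end Boundary

section AsymptoticSlope

variable {f f' : ℝ → ℝ} {c s₀ : ℝ}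

lemma tendsto_slope_atBot (lim : Tendsto (fun s => f s / s) atBot (𝓝 c)) (s : ℝ) :
    Tendsto (fun t => (f s - f t) / (s - t)) atBot (𝓝 c) := by
  have s_div : Tendsto (fun t : ℝ => s / t) atBot (𝓝 0) := tendsto_const_nhds.div_atBot tendsto_id
  have fs_div : Tendsto (fun t : ℝ => f s / t) atBot (𝓝 0) :=
    tendsto_const_nhds.div_atBot tendsto_id
  have := (fs_div.sub lim).div (s_div.sub_const 1) (by norm_num)
  rw [show (0 - c) / (0 - 1) = c by ring] at this
  refine this.congr' ?_
  filter_upwards [eventually_lt_atBot 0] with t ht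
  simp only [Pi.div_apply, ← sub_div, div_sub_one ht.ne, div_div_div_cancel_right₀ ht.ne]

lemma le_of_forall_deriv_le (hf : ∀ s, HasDerivAt f (f' s) s)
    (lim : Tendsto (fun s => f s / s) atBot (𝓝 c)) {K : ℝ} (le : ∀ s ≤ s₀, f' s ≤ K) : c ≤ K :=
  le_of_tendsto (tendsto_slope_atBot lim s₀) <| (eventually_lt_atBot s₀).mono fun t ht => by
    obtain ⟨ξ, hξ, slope_eq⟩ := exists_hasDerivAt_eq_slope f f' ht
      (fun x _ => (hf x).continuousAt.continuousWithinAt) fun x _ => hf x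
    exact slope_eq ▸ le ξ hξ.2.le

lemma tendsto_deriv_of_antitoneOn (hf : ∀ s, HasDerivAt f (f' s) s)
    (antitone : AntitoneOn f' (Set.Iic s₀)) (lim : Tendsto (fun s => f s / s) atBot (𝓝 c)) :
    Tendsto f' atBot (𝓝 c) := by
  have le_c : ∀ s ≤ s₀, f' s ≤ c := fun s hs => by
    have neg_lim : Tendsto (fun s => -f s / s) atBot (𝓝 (-c)) := by
      simpa only [neg_div] using lim.neg
    refine neg_le_neg_iff.1 (le_of_forall_deriv_le (s₀ := s) (fun t => (hf t).fun_neg) neg_lim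
      fun t ht => neg_le_neg (antitone (ht.trans hs) hs ht))
  refine tendsto_order.2 ⟨fun c' hc' => ?_, fun c' hc' => ?_⟩
  · obtain ⟨s₁, hs₁, lt⟩ : ∃ s₁ ≤ s₀, c' < f' s₁ := by
      by_contra! le
      exact hc'.not_ge (le_of_forall_deriv_le hf lim le)
    filter_upwards [eventually_le_atBot s₁] with s hs
    exact lt.trans_le (antitone (hs.trans hs₁) hs₁ hs)
  · filter_upwards [eventually_le_atBot s₀] with s hs
    exact (le_c s hs).trans_lt hc'

/-- The bound on `U` prevents the derivative from concentrating on short intervals. -/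
lemma tendsto_zero_of_le_deriv {U : ℝ → ℝ} {K : ℝ} (hf : ∀ s, HasDerivAt f (f' s) s)
    (lim : Tendsto f atBot (𝓝 c)) (nonneg : ∀ s, 0 ≤ U s) (le : ∀ s ≤ s₀, U s ≤ f' s) (hK : 0 ≤ K)
    (antitone : AntitoneOn (fun s => U s * exp (-(K * s))) (Set.Iic s₀)) :
    Tendsto U atBot (𝓝 0) := by
  have increments : Tendsto (fun s => exp K * (f s - f (s - 1))) atBot (𝓝 0) := by
    have := lim.comp (tendsto_atBot_add_const_right atBot (-1) tendsto_id)
    simpa [← sub_eq_add_neg] using (lim.sub this).const_mul (exp K)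
  refine tendsto_of_tendsto_of_tendsto_of_le_of_le' tendsto_const_nhds increments
    (.of_forall nonneg) ((eventually_le_atBot s₀).mono fun s hs => ?_)
  obtain ⟨ξ, hξ, slope_eq⟩ := exists_hasDerivAt_eq_slope f f' (sub_one_lt s)
    (fun x _ => (hf x).continuousAt.continuousWithinAt) fun x _ => hf x
  rw [sub_sub_cancel, div_one] at slope_eq
  have hξ₀ : ξ ≤ s₀ := hξ.2.le.trans hs
  calc U s = U s * exp (-(K * s)) * exp (K * s) := by rw [mul_assoc, ← exp_add]; simp
    _ ≤ U ξ * exp (-(K * ξ)) * exp (K * s) :=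
      mul_le_mul_of_nonneg_right (antitone hξ₀ hs hξ.2.le) (exp_pos _).le
    _ = U ξ * exp (K * (s - ξ)) := by rw [mul_assoc, ← exp_add]; ring_nf
    _ ≤ U ξ * exp K := by
      refine mul_le_mul_of_nonneg_left (exp_le_exp.2 ?_) (nonneg ξ)
      exact mul_le_of_le_one_right hK (by linarith [hξ.1])
    _ ≤ exp K * (f s - f (s - 1)) := by
      rw [mul_comm, ← slope_eq]
      exact mul_le_mul_of_nonneg_left (le ξ hξ₀) (exp_pos K).le

lemma eventually_abs_le_of_tendsto_div (lim : Tendsto (fun s => f s / s) atBot (𝓝 0)) {δ : ℝ}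
    (hδ : 0 < δ) : ∀ᶠ s in atBot, |f s| ≤ -(δ * s) := by
  filter_upwards [lim.eventually (Metric.closedBall_mem_nhds 0 hδ), eventually_lt_atBot 0]
    with s hs neg
  rw [dist_zero_right, norm_eq_abs, abs_div, abs_of_neg neg, div_le_iff₀ (neg_pos.2 neg)] at hs
  linarith

end AsymptoticSlope

section VertexProfile

/-- The tt* system in the variable `s = log r`, after subtracting the leading behaviour at the
vertex: `u = 2 w₀ - 3 s` and `v = 2 w₀ + 2 w₁ - 4 s`, with half-derivatives `L` and `N`. -/
structure VertexProfile (u v L N : ℝ → ℝ) : Prop where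
  hasDerivAt_u : ∀ s, HasDerivAt u (2 * L s) s
  hasDerivAt_v : ∀ s, HasDerivAt v (2 * N s) s
  hasDerivAt_L : ∀ s, HasDerivAt L (2 * (exp (8 * s + 2 * u s) - exp (v s - 2 * u s))) s
  hasDerivAt_N : ∀ s, HasDerivAt N (2 * (exp (8 * s + 2 * u s) - exp (2 * u s - 2 * v s))) s
  tendsto_u_div : Tendsto (fun s => u s / s) atBot (𝓝 0)
  tendsto_v_div : Tendsto (fun s => v s / s) atBot (𝓝 0)

lemma tendsto_exp_mul_atBot {c : ℝ} (hc : 0 < c) : Tendsto (fun s => exp (c * s)) atBot (𝓝 0) :=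
  tendsto_exp_atBot.comp (tendsto_id.const_mul_atBot hc)

lemma hasDerivAt_exp_mul (c t : ℝ) : HasDerivAt (fun t => exp (c * t)) (c * exp (c * t)) t := by
  simpa [mul_comm] using ((hasDerivAt_id t).const_mul c).exp

namespace VertexProfile

/-- Bounds on a vertex profile on the half-line `(-∞, s₀]`. -/
structure BoundedBelow (u v L N : ℝ → ℝ) (s₀ : ℝ) : Prop where
  nonpos : s₀ ≤ 0
  abs_u_le : ∀ s ≤ s₀, |u s| ≤ -(s / 4)
  abs_v_le : ∀ s ≤ s₀, |v s| ≤ -(s / 4)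
  abs_L_le : ∀ s ≤ s₀, |L s| ≤ 1 / 4
  abs_N_le : ∀ s ≤ s₀, |N s| ≤ 1 / 4

lemma BoundedBelow.exp_affine_le {u v L N : ℝ → ℝ} {s₀ s : ℝ} (bounds : BoundedBelow u v L N s₀)
    (hs : s ≤ s₀) : exp (8 * s + 2 * u s) ≤ exp (7 * s) :=
  exp_le_exp.2 (by linarith [abs_le.1 (bounds.abs_u_le s hs), bounds.nonpos])

variable {u v L N : ℝ → ℝ} (h : VertexProfile u v L N)
include h

lemma exists_exp_affine_le : ∃ s₀, ∀ s ≤ s₀, exp (8 * s + 2 * u s) ≤ exp (7 * s) :=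
  eventually_atBot.1 <| (eventually_abs_le_of_tendsto_div h.tendsto_u_div one_half_pos).mono
    fun s hs => exp_le_exp.2 (by linarith [le_abs_self (u s)])

/-- Up to an exponentially small correction `f` is concave near `-∞`. -/
lemma tendsto_velocity {f g k : ℝ → ℝ} (hf : ∀ s, HasDerivAt f (2 * g s) s)
    (hg : ∀ s, HasDerivAt g (2 * (exp (8 * s + 2 * u s) - k s)) s) (hk : ∀ s, 0 ≤ k s)
    (lim : Tendsto (fun s => f s / s) atBot (𝓝 0)) : Tendsto g atBot (𝓝 0) := by
  obtain ⟨s₀, affine_le⟩ := h.exists_exp_affine_le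
  have exp_zero := tendsto_exp_mul_atBot (c := 7) (by norm_num)
  have corrected_lim : Tendsto (fun s => (f s - 4 / 49 * exp (7 * s)) / s) atBot (𝓝 0) := by
    simpa [sub_div] using lim.sub ((exp_zero.const_mul (4 / 49)).div_atBot tendsto_id)
  have antitone : AntitoneOn (fun s => 2 * g s - 4 / 49 * (7 * exp (7 * s))) (Set.Iic s₀) :=
    antitoneOn_Iic_of_hasDerivAt_nonpos
      (fun s => ((hg s).const_mul 2).fun_sub (((hasDerivAt_exp_mul 7 s).const_mul 7).const_mul _))
      fun s hs => by linarith [hk s, affine_le s hs]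
  have corrected := tendsto_deriv_of_antitoneOn
    (fun s => (hf s).fun_sub ((hasDerivAt_exp_mul 7 s).const_mul _)) antitone corrected_lim
  convert (corrected.add ((exp_zero.const_mul 7).const_mul (4 / 49))).div_const 2 using 2 <;> ring

lemma tendsto_L : Tendsto L atBot (𝓝 0) :=
  h.tendsto_velocity h.hasDerivAt_u h.hasDerivAt_L (fun _ => (exp_pos _).le) h.tendsto_u_div

lemma tendsto_N : Tendsto N atBot (𝓝 0) :=
  h.tendsto_velocity h.hasDerivAt_v h.hasDerivAt_N (fun _ => (exp_pos _).le) h.tendsto_v_div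

lemma exists_boundedBelow : ∃ s₀, BoundedBelow u v L N s₀ := by
  have quarter : (0 : ℝ) < 1 / 4 := by norm_num
  have u_le := eventually_abs_le_of_tendsto_div h.tendsto_u_div quarter
  have v_le := eventually_abs_le_of_tendsto_div h.tendsto_v_div quarter
  have L_le := h.tendsto_L.eventually (Metric.closedBall_mem_nhds 0 quarter)
  have N_le := h.tendsto_N.eventually (Metric.closedBall_mem_nhds 0 quarter)
  simp only [one_div_mul_eq_div, dist_zero_right, norm_eq_abs] at u_le v_le L_le N_le
  obtain ⟨s₀, hs₀⟩ := eventually_atBot.1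
    ((eventually_le_atBot 0).and (u_le.and (v_le.and (L_le.and N_le))))
  exact ⟨s₀, (hs₀ s₀ le_rfl).1, fun s hs => (hs₀ s hs).2.1, fun s hs => (hs₀ s hs).2.2.1,
    fun s hs => (hs₀ s hs).2.2.2.1, fun s hs => (hs₀ s hs).2.2.2.2⟩

lemma tendsto_exp_v_sub : Tendsto (fun s => exp (v s - 2 * u s)) atBot (𝓝 0) := by
  obtain ⟨s₀, bounds⟩ := h.exists_boundedBelow
  refine tendsto_zero_of_le_deriv (s₀ := s₀) (K := 2)
    (fun s => (h.hasDerivAt_L s).fun_neg.fun_add ((hasDerivAt_exp_mul 7 s).const_mul (2 / 7)))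
    (h.tendsto_L.neg.add ((tendsto_exp_mul_atBot (by norm_num)).const_mul _))
    (fun s => (exp_pos _).le) (fun s hs => ?_) two_pos.le ?_
  · linarith [bounds.exp_affine_le hs, exp_pos (v s - 2 * u s)]
  · refine antitoneOn_Iic_of_hasDerivAt_nonpos (fun s =>
      ((h.hasDerivAt_v s).fun_sub ((h.hasDerivAt_u s).const_mul 2)).exp.fun_mul
        ((hasDerivAt_id s).const_mul 2).fun_neg.exp) fun s hs => ?_
    have factor : exp (v s - 2 * u s) * (2 * N s - 2 * (2 * L s)) * exp (-(2 * s)) +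
        exp (v s - 2 * u s) * (exp (-(2 * s)) * -(2 * 1)) =
        exp (v s - 2 * u s) * exp (-(2 * s)) * (2 * N s - 4 * L s - 2) := by ring
    refine factor.trans_le (mul_nonpos_of_nonneg_of_nonpos (by positivity) ?_)
    linarith [abs_le.1 (bounds.abs_L_le s hs), abs_le.1 (bounds.abs_N_le s hs)]

end VertexProfile

end VertexProfile

section VertexSection

/-- The Toda potentials of a vertex profile. -/
def vertexPotential (u v : ℝ → ℝ) : Fin 4 → ℝ → ℝ := ![u, v - u, u - v, -u]

/-- The Toda velocities of a vertex profile. -/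
def vertexVelocity (L N : ℝ → ℝ) : Fin 4 → ℝ → ℝ := ![L, N - L, L - N, -L]

lemma vertexPotential_neg_one_sub (u v : ℝ → ℝ) (i : Fin 4) (s : ℝ) :
    vertexPotential u v (-1 - i) s = -vertexPotential u v i s := by
  fin_cases i
  exacts [rfl, (neg_sub (v s) (u s)).symm, (neg_sub (u s) (v s)).symm, (neg_neg (u s)).symm]

lemma exp_vertexPotential_sub (u v : ℝ → ℝ) (s : ℝ) :
    exp (vertexPotential u v 0 s - vertexPotential u v (0 - 1) s) = exp (2 * u s) ∧
    exp (vertexPotential u v 1 s - vertexPotential u v (1 - 1) s) = exp (v s - 2 * u s) ∧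
    exp (vertexPotential u v 2 s - vertexPotential u v (2 - 1) s) = exp (2 * u s - 2 * v s) ∧
    exp (vertexPotential u v 3 s - vertexPotential u v (3 - 1) s) = exp (v s - 2 * u s) := by
  refine ⟨congrArg exp ?_, congrArg exp ?_, congrArg exp ?_, congrArg exp ?_⟩
  · change u s - -u s = _
    ring
  · change v s - u s - u s = _
    ring
  · change u s - v s - (v s - u s) = _
    ring
  · change -u s - (u s - v s) = _
    ring

lemma todaCoupling_vertexPotential (u v : ℝ → ℝ) (s : ℝ) :
    todaCoupling (vertexPotential u v) 0 s = exp (8 * s + 2 * u s) ∧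
    todaCoupling (vertexPotential u v) 1 s = exp (v s - 2 * u s) ∧
    todaCoupling (vertexPotential u v) 2 s = exp (2 * u s - 2 * v s) ∧
    todaCoupling (vertexPotential u v) 3 s = exp (v s - 2 * u s) := by
  simp only [todaCoupling, exp_vertexPotential_sub, cyclicWeight, reduceIte, Fin.reduceEq, one_pow,
    one_mul, ← exp_nat_mul, ← exp_add, and_self, and_true]
  ring_nf

lemma backwardCoeff_vertexPotential (u v : ℝ → ℝ) (a b : ℝ) :
    backwardCoeff (vertexPotential u v) 0 a b = exp (4 * b + 2 * u ((a + b) / 2)) ∧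
    backwardCoeff (vertexPotential u v) 1 a b =
      exp (v ((a + b) / 2) - 2 * u ((a + b) / 2)) ∧
    backwardCoeff (vertexPotential u v) 2 a b =
      exp (2 * u ((a + b) / 2) - 2 * v ((a + b) / 2)) ∧
    backwardCoeff (vertexPotential u v) 3 a b =
      exp (v ((a + b) / 2) - 2 * u ((a + b) / 2)) := by
  simp only [backwardCoeff, exp_vertexPotential_sub, cyclicWeight, reduceIte, Fin.reduceEq, one_mul,
    exp_add, Nat.cast_ofNat, and_self]

/-- A nonnegative flat section of the vertex connection which is invariant under reflection,
together with its limit `H` as `b → -∞`. -/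
structure IsVertexSection (u v : ℝ → ℝ) (y : ℝ → ℝ → Fin 4 → ℝ) (H : ℝ → Fin 4 → ℝ) : Prop where
  nonneg : ∀ a b i, 0 ≤ y a b i
  hasDerivAt_zero : ∀ a b, HasDerivAt (fun b => y a b 0)
    (-(exp (4 * b + 2 * u ((a + b) / 2)) * y a b 3)) b
  hasDerivAt_one : ∀ a b, HasDerivAt (fun b => y a b 1)
    (-(exp (v ((a + b) / 2) - 2 * u ((a + b) / 2)) * y a b 0)) b
  hasDerivAt_two : ∀ a b, HasDerivAt (fun b => y a b 2)
    (-(exp (2 * u ((a + b) / 2) - 2 * v ((a + b) / 2)) * y a b 1)) b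
  two_eq : ∀ a b, y a b 2 = exp (u ((a + b) / 2) - v ((a + b) / 2)) * y b a 1
  le_limit : ∀ a b i, y a b i ≤ H a i
  tendsto : ∀ a i, Tendsto (fun b => y a b i) atBot (𝓝 (H a i))

namespace VertexProfile

variable {u v L N : ℝ → ℝ} (h : VertexProfile u v L N)
include h

lemma isCyclicToda : IsCyclicToda (vertexPotential u v) (vertexVelocity L N) where
  hasDerivAt_potential i s := by
    fin_cases i
    · exact h.hasDerivAt_u s
    · exact ((h.hasDerivAt_v s).sub (h.hasDerivAt_u s)).congr_deriv (mul_sub ..).symm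
    · exact ((h.hasDerivAt_u s).sub (h.hasDerivAt_v s)).congr_deriv (mul_sub ..).symm
    · exact (h.hasDerivAt_u s).neg.congr_deriv (mul_neg ..).symm
  hasDerivAt_velocity i s := by
    have hL := h.hasDerivAt_L s
    have hN := h.hasDerivAt_N s
    obtain ⟨h₀, h₁, h₂, h₃⟩ := todaCoupling_vertexPotential u v s
    fin_cases i
    · refine hL.congr_deriv ?_
      simp [h₀, h₁]
    · refine (hN.sub hL).congr_deriv ?_
      simp only [Fin.mk_one, Fin.reduceAdd, h₁, h₂]
      ring
    · refine (hL.sub hN).congr_deriv ?_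
      simp only [Fin.reduceFinMk, Fin.reduceAdd, h₂, h₃]
      ring
    · refine hL.neg.congr_deriv ?_
      simp only [Fin.reduceFinMk, Fin.reduceAdd, h₃, h₀]
      ring

variable {y : ℝ → ℝ → Fin 4 → ℝ}

omit h in
lemma BoundedBelow.sum_backwardCoeff_le {s₀ : ℝ} (bounds : BoundedBelow u v L N s₀) {a b : ℝ}
    (hs : (a + b) / 2 ≤ s₀) : ∑ i, backwardCoeff (vertexPotential u v) i a b ≤
      exp (7 / 2 * b) * exp (-(a / 2)) + 2 * exp (v ((a + b) / 2) - 2 * u ((a + b) / 2)) +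
        exp (2 * u ((a + b) / 2) - 2 * v ((a + b) / 2)) := by
  have weight_le : exp (4 * b + 2 * u ((a + b) / 2)) ≤ exp (7 / 2 * b) * exp (-(a / 2)) := by
    rw [← exp_add, exp_le_exp]
    linarith [abs_le.1 (bounds.abs_u_le _ hs), bounds.nonpos]
  rw [Fin.sum_univ_four]
  simp only [backwardCoeff_vertexPotential]
  linarith

/-- The Toda equations make `∫ U db` and `∫ V db` telescope. -/
lemma exists_eventually_section_le (hy : h.isCyclicToda.connection.IsSection y)
    (nonneg : ∀ a b i, 0 ≤ y a b i) (A : ℝ) :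
    ∃ C, ∀ᶠ b in atBot, ∀ a, |a| ≤ A → ∀ i, y a b i ≤ C := by
  obtain ⟨s₀, bounds⟩ := h.exists_boundedBelow
  have continuous_L : Continuous L :=
    continuous_iff_continuousAt.2 fun s => (h.hasDerivAt_L s).continuousAt
  have continuous_N : Continuous N :=
    continuous_iff_continuousAt.2 fun s => (h.hasDerivAt_N s).continuousAt
  let κ : ℝ → ℝ → ℝ := fun a b => -(2 * L ((a + b) / 2)) - N ((a + b) / 2) +
    6 / 7 * exp (7 * ((a + b) / 2)) + 2 / 7 * exp (7 / 2 * b) * exp (-(a / 2))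
  have hasDerivAt_κ := fun a b : ℝ =>
    have hL := hasDerivAt_comp_half_add_right (h.hasDerivAt_L ((a + b) / 2))
    have hN := hasDerivAt_comp_half_add_right (h.hasDerivAt_N ((a + b) / 2))
    have hexp := hasDerivAt_comp_half_add_right ((hasDerivAt_exp_mul 7 ((a + b) / 2)).congr_deriv
      (show _ = 2 * (7 / 2 * exp (7 * ((a + b) / 2))) by ring))
    (((hL.const_mul 2).fun_neg.fun_sub hN).fun_add (hexp.const_mul (6 / 7))).fun_add
      (((hasDerivAt_exp_mul (7 / 2) b).const_mul (2 / 7)).mul_const (exp (-(a / 2))))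
  have le_κ : ∀ a b, a + b ≤ 2 * s₀ → -(3 / 4) ≤ κ a b := fun a b hab => by
    have hs : (a + b) / 2 ≤ s₀ := by linarith
    have : 0 < 6 / 7 * exp (7 * ((a + b) / 2)) := by positivity
    have : 0 < 2 / 7 * exp (7 / 2 * b) * exp (-(a / 2)) := by positivity
    simp only [κ]
    linarith [abs_le.1 (bounds.abs_L_le _ hs), abs_le.1 (bounds.abs_N_le _ hs)]
  obtain ⟨C, hC⟩ := h.isCyclicToda.exists_section_le hy nonneg hasDerivAt_κ
    (fun b => by fun_prop) (fun a b hab => by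
      have hs : (a + b) / 2 ≤ s₀ := by linarith
      linarith [bounds.sum_backwardCoeff_le hs, bounds.exp_affine_le hs]) le_κ A
  exact ⟨C, (eventually_le_atBot (2 * s₀ - A)).mono fun b hb a ha => hC a ha b hb⟩

lemma tendsto_vertexVelocity (i : Fin 4) : Tendsto (vertexVelocity L N i) atBot (𝓝 0) := by
  have hL := h.tendsto_L
  have hN := h.tendsto_N
  fin_cases i
  · exact hL
  · exact sub_self (0 : ℝ) ▸ hN.sub hL
  · exact sub_self (0 : ℝ) ▸ hL.sub hN
  · exact neg_zero (G := ℝ) ▸ hL.neg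

theorem exists_isVertexSection :
    ∃ y H, IsVertexSection u v y H ∧ IsCyclicChain H ∧ 0 < ∑ i, H 0 i := by
  obtain ⟨y, hy, nonneg, pos, symm⟩ :=
    h.isCyclicToda.exists_nonneg_section_eq_reflect (vertexPotential_neg_one_sub u v)
  obtain ⟨H, chain, tendsto⟩ := h.isCyclicToda.exists_tendsto_section hy nonneg
    h.tendsto_vertexVelocity (h.exists_eventually_section_le hy nonneg)
  have le_H : ∀ a b i, y a b i ≤ H a i := fun a b i =>
    (h.isCyclicToda.antitone_section hy nonneg a i).ge_of_tendsto (tendsto a i) b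
  have hasDerivAt := h.isCyclicToda.hasDerivAt_right hy
  refine ⟨y, H, ⟨nonneg, fun a b => ?_, fun a b => ?_, fun a b => ?_, fun a b => ?_, le_H, tendsto⟩,
    chain, pos.trans_le (Finset.sum_le_sum fun i _ => le_H 0 0 i)⟩
  · exact (backwardCoeff_vertexPotential u v a b).1 ▸ hasDerivAt 0 a b
  · exact (backwardCoeff_vertexPotential u v a b).2.1 ▸ hasDerivAt 1 a b
  · exact (backwardCoeff_vertexPotential u v a b).2.2.1 ▸ hasDerivAt 2 a b
  · exact (congrFun (congrFun (congrFun symm a) b) 2).symm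

end VertexProfile

end VertexSection

section ExponentialTails

open Asymptotics MeasureTheory

variable {D D' : ℝ → ℝ} {c l t₀ K : ℝ}

lemma abs_sub_le_of_abs_deriv_le_exp (hc : 0 < c) (hD : ∀ t, HasDerivAt D (D' t) t)
    (le : ∀ t ≤ t₀, |D' t| ≤ K * exp (c * t)) (lim : Tendsto D atBot (𝓝 l)) :
    ∀ t ≤ t₀, |D t - l| ≤ K / c * exp (c * t) := by
  have hE : ∀ t, HasDerivAt (fun t => K / c * exp (c * t)) (K * exp (c * t)) t := fun t =>
    ((hasDerivAt_exp_mul c t).const_mul (K / c)).congr_deriv (by field_simp)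
  have E_lim : Tendsto (fun t => K / c * exp (c * t)) atBot (𝓝 0) := by
    simpa using (tendsto_exp_mul_atBot hc).const_mul (K / c)
  have mono := monotoneOn_Iic_of_hasDerivAt_nonneg (fun t => (hD t).fun_add (hE t))
    fun t ht => by linarith [abs_le.1 (le t ht)]
  have anti := antitoneOn_Iic_of_hasDerivAt_nonpos (fun t => (hD t).fun_sub (hE t))
    fun t ht => by linarith [abs_le.1 (le t ht)]
  intro t ht
  have l_le : l + 0 ≤ D t + K / c * exp (c * t) := le_of_tendsto (lim.add E_lim) <|
    (eventually_le_atBot t).mono fun s hs => mono (hs.trans ht) ht hs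
  have le_l : D t - K / c * exp (c * t) ≤ l - 0 := ge_of_tendsto (lim.sub E_lim) <|
    (eventually_le_atBot t).mono fun s hs => anti (hs.trans ht) ht hs
  rw [abs_le]
  constructor <;> linarith

lemma exists_isBigO_sub_of_deriv_isBigO_exp (hc : 0 < c) (hD : ∀ t, HasDerivAt D (D' t) t)
    (bigO : D' =O[atBot] fun t => exp (c * t)) :
    ∃ l, (fun t => D t - l) =O[atBot] fun t => exp (c * t) := by
  obtain ⟨K, hK⟩ := bigO.bound
  simp only [norm_eq_abs, abs_exp] at hK
  obtain ⟨t₀, ht₀⟩ := eventually_atBot.1 hK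
  have meas : Measurable D' := (funext fun t => (hD t).deriv : deriv D = D') ▸ measurable_deriv D
  have integrable : IntegrableOn D' (Set.Iic t₀) :=
    ((integrableOn_exp_mul_Iic hc t₀).const_mul K).mono' meas.aestronglyMeasurable <|
      (ae_restrict_mem measurableSet_Iic).mono ht₀
  have lim := tendsto_limUnder_of_hasDerivAt_of_integrableOn_Iic (fun t _ => hD t) integrable
  refine ⟨limUnder atBot D, .of_bound (K / c) ((eventually_le_atBot t₀).mono fun t ht => ?_)⟩
  simpa only [norm_eq_abs, abs_exp] using abs_sub_le_of_abs_deriv_le_exp hc hD ht₀ lim t ht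

end ExponentialTails

section CyclicChain

open Asymptotics MeasureTheory

variable {n : ℕ} [NeZero n]

lemma cyclicWeight_add_one_mul_pow_le {a δ : ℝ} (ha : exp a ≤ δ) (i : Fin n) :
    cyclicWeight (i + 1) a * δ ^ ((i + 1 : Fin n) : ℕ) ≤ δ ^ ((i : ℕ) + 1) := by
  obtain ⟨m, rfl⟩ := Nat.exists_eq_succ_of_ne_zero (NeZero.ne n)
  refine Fin.lastCases ?_ (fun j => ?_) i
  · rw [Fin.last_add_one, cyclicWeight, if_pos rfl, Fin.val_zero, pow_zero, mul_one, exp_nat_mul]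
    exact pow_le_pow_left₀ (exp_pos a).le ha _
  · rw [Fin.coeSucc_eq_succ, cyclicWeight, if_neg (Fin.succ_ne_zero j), one_mul, Fin.val_succ,
      Fin.val_castSucc]

namespace IsCyclicChain

variable {H : ℝ → Fin n → ℝ} (h : IsCyclicChain H)
include h

lemma continuous (i : Fin n) : Continuous (H · i) :=
  continuous_iff_continuousAt.2 fun a => (h.hasDerivAt a i).continuousAt

lemma antitone (i : Fin n) : Antitone (H · i) :=
  antitone_of_hasDerivAt_nonpos (fun a => h.hasDerivAt a i) fun a =>
    neg_nonpos.2 (mul_nonneg (cyclicWeight_pos _ a).le (h.nonneg a _))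

/-- With weights `δ⁻ⁱ` the sum of the components grows at most at rate `δ` to the left. -/
lemma isBigO_exp {δ : ℝ} (hδ : 0 < δ) (i : Fin n) :
    (H · i) =O[atBot] fun a => exp (-(δ * a)) := by
  let S : ℝ → ℝ := fun a => ∑ i, H a i / δ ^ (i : ℕ)
  have hS : ∀ a, HasDerivAt S (∑ i : Fin n,
      -(cyclicWeight (i + 1) a * H a (i + 1)) / δ ^ (i : ℕ)) a := fun a =>
    .fun_sum fun i _ => (h.hasDerivAt a i).div_const _
  have le : ∀ a ≤ log δ, -(δ * S a) ≤ ∑ i : Fin n,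
      -(cyclicWeight (i + 1) a * H a (i + 1)) / δ ^ (i : ℕ) := fun a ha => by
    simp only [neg_div, Finset.sum_neg_distrib, neg_le_neg_iff, S]
    rw [← Equiv.sum_comp (Equiv.addRight (1 : Fin n)) fun i => H a i / δ ^ (i : ℕ), Finset.mul_sum]
    refine Finset.sum_le_sum fun i _ => ?_
    have := mul_le_mul_of_nonneg_right (cyclicWeight_add_one_mul_pow_le
      ((exp_le_exp.2 ha).trans_eq (exp_log hδ)) i) (h.nonneg a (i + 1))
    rw [Equiv.coe_addRight, div_le_iff₀ (by positivity), mul_div_assoc', div_mul_eq_mul_div,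
      le_div_iff₀ (by positivity)]
    refine (Eq.trans_le ?_ this).trans_eq ?_ <;> ring
  have mono := monotoneOn_Iic_mul_exp hS (fun a => (hasDerivAt_id a).const_mul δ)
    (fun a ha => by simpa only [mul_one] using le a ha)
  refine .of_bound (δ ^ (i : ℕ) * (S (log δ) * exp (δ * log δ)))
    ((eventually_le_atBot (log δ)).mono fun a ha => ?_)
  rw [norm_of_nonneg (h.nonneg a i), norm_of_nonneg (exp_pos _).le, exp_neg, ← div_eq_mul_inv,
    le_div_iff₀ (exp_pos _)]
  have le_S : H a i ≤ δ ^ (i : ℕ) * S a := by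
    rw [← div_le_iff₀' (by positivity)]
    exact Finset.single_le_sum (f := fun i : Fin n => H a i / δ ^ (i : ℕ))
      (fun j _ => div_nonneg (h.nonneg a j) (by positivity)) (Finset.mem_univ i)
  calc H a i * exp (δ * a) ≤ δ ^ (i : ℕ) * (S a * exp (δ * a)) := by
        rw [← mul_assoc]
        exact mul_le_mul_of_nonneg_right le_S (exp_pos _).le
    _ ≤ _ := mul_le_mul_of_nonneg_left (mono ha Set.self_mem_Iic ha) (by positivity)

lemma exists_zero_pos (pos : 0 < ∑ i, H 0 i) : ∃ a, 0 < H a 0 := by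
  by_contra! nonpos
  obtain ⟨m, rfl⟩ := Nat.exists_eq_succ_of_ne_zero (NeZero.ne n)
  have eq_zero : ∀ i a, H a i = 0 := fun i => by
    induction i using Fin.induction with
    | zero => exact fun a => (nonpos a).antisymm (h.nonneg a 0)
    | succ i ih =>
      intro a
      have := (h.hasDerivAt a i.castSucc).unique
        ((hasDerivAt_const a (0 : ℝ)).congr_of_eventuallyEq (.of_forall ih))
      rw [Fin.coeSucc_eq_succ] at this
      exact (mul_eq_zero.1 (neg_eq_zero.1 this)).resolve_left (cyclicWeight_pos _ a).ne'
  simp only [eq_zero, Finset.sum_const_zero, lt_irrefl] at pos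

end IsCyclicChain

end CyclicChain

section LaplaceTransform

open Asymptotics MeasureTheory

/-- The two-sided Laplace transform `∫ e^{za} f(a) da`, i.e. the Mellin transform of
`f ∘ log` at `z`. -/
noncomputable def laplaceTransform (f : ℝ → ℝ) (z : ℝ) : ℝ := ∫ a, exp (z * a) * f a

variable {f : ℝ → ℝ}

lemma laplaceTransform_pos (hf : Continuous f) (nonneg : ∀ a, 0 ≤ f a) (pos : ∃ a, 0 < f a)
    {z : ℝ} (integrable : Integrable fun a => exp (z * a) * f a) : 0 < laplaceTransform f z := by
  obtain ⟨a, ha⟩ := pos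
  exact integral_pos_of_integrable_nonneg_nonzero (x := a) (by fun_prop) integrable
    (fun a => mul_nonneg (exp_pos _).le (nonneg a)) (mul_pos (exp_pos _) ha).ne'

lemma convexOn_log_laplaceTransform {S : Set ℝ} (hS : Convex ℝ S) (nonneg : ∀ a, 0 ≤ f a)
    (integrable : ∀ z ∈ S, Integrable fun a => exp (z * a) * f a)
    (pos : ∀ z ∈ S, 0 < laplaceTransform f z) :
    ConvexOn ℝ S fun z => log (laplaceTransform f z) := by
  refine ⟨hS, fun s hs t ht a b ha hb hab => ?_⟩
  have hst : a * s + b * t ∈ S := hS hs ht ha hb hab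
  set m := laplaceTransform f
  let k := a * log (m s) + b * log (m t)
  have young : ∀ x, exp (-k) * (exp ((a * s + b * t) * x) * f x) ≤
      a / m s * (exp (s * x) * f x) + b / m t * (exp (t * x) * f x) := fun x => by
    have := convexOn_exp.2 (Set.mem_univ (s * x - log (m s))) (Set.mem_univ (t * x - log (m t)))
      ha hb hab
    rw [exp_sub, exp_sub, exp_log (pos s hs), exp_log (pos t ht)] at this
    have split : exp (a • (s * x - log (m s)) + b • (t * x - log (m t))) =
        exp (-k) * exp ((a * s + b * t) * x) := by
      rw [← exp_add]
      congr 1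
      simp only [k, smul_eq_mul]
      ring
    rw [split] at this
    refine (Eq.trans_le ?_ (mul_le_mul_of_nonneg_right this (nonneg x))).trans_eq ?_
    · ring
    · simp only [smul_eq_mul]
      ring
  have integrated := integral_mono ((integrable _ hst).const_mul _)
    (((integrable s hs).const_mul (a / m s)).add ((integrable t ht).const_mul (b / m t))) young
  simp only [Pi.add_apply] at integrated
  rw [integral_add ((integrable s hs).const_mul _) ((integrable t ht).const_mul _),
    integral_const_mul, integral_const_mul, integral_const_mul] at integrated
  change exp (-k) * m (a * s + b * t) ≤ a / m s * m s + b / m t * m t at integrated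
  rw [div_mul_cancel₀ _ (pos s hs).ne', div_mul_cancel₀ _ (pos t ht).ne', hab, exp_neg,
    inv_mul_le_iff₀ (exp_pos _), mul_one] at integrated
  exact (log_le_iff_le_exp (pos _ hst)).2 integrated

/-- Bohr–Mollerup: up to normalization, a log-convex solution of `m(z + n) = z^n m(z)` is
`n^z Γ(z/n)^n`. -/
lemma pow_mul_eq_of_log_convexOn {n : ℕ} [NeZero n] {m : ℝ → ℝ} (pos : ∀ z, 0 < z → 0 < m z)
    (convex : ConvexOn ℝ (Set.Ioi 0) fun z => log (m z))
    (shift : ∀ z, 0 < z → m (z + n) = z ^ n * m z) {z : ℝ} (hz : 0 < z) :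
    z ^ n * m z = m n * (exp (z * log n) * Gamma (1 + z / n) ^ n) := by
  have hn : (0 : ℝ) < n := Nat.cast_pos.2 (Nat.pos_of_neZero n)
  let g : ℝ → ℝ := fun x => exp ((log (m (n * x)) - log (m n)) / n - (x - 1) * log n)
  have g_convex : ConvexOn ℝ (Set.Ioi 0) (log ∘ g) := by
    refine ⟨convex_Ioi 0, fun s hs t ht a b ha hb hab => ?_⟩
    have := convex.2 (Set.mem_Ioi.2 (mul_pos hn hs)) (Set.mem_Ioi.2 (mul_pos hn ht)) ha hb hab
    simp only [smul_eq_mul] at this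
    simp only [smul_eq_mul, Function.comp_apply, g, log_exp]
    rw [show (n : ℝ) * (a * s + b * t) = a * (n * s) + b * (n * t) by ring,
      eq_sub_of_add_eq' hab, ← sub_nonneg]
    rw [eq_sub_of_add_eq' hab, ← sub_nonneg] at this
    refine (div_nonneg this hn.le).trans_eq ?_
    ring
  have g_shift : ∀ {x : ℝ}, 0 < x → g (x + 1) = x * g x := fun {x} hx => by
    simp only [g]
    rw [show (n : ℝ) * (x + 1) = n * x + n by ring, shift _ (mul_pos hn hx),
      log_mul (by positivity) (pos _ (mul_pos hn hx)).ne', log_pow, log_mul hn.ne' hx.ne',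
      ← exp_log hx, ← exp_add, log_exp, exp_log hx]
    congr 1
    field_simp
    ring
  have g_eq := eq_Gamma_of_log_convex g_convex g_shift (fun _ => exp_pos _) (by simp [g])
    (show 1 + z / n ∈ Set.Ioi (0 : ℝ) from add_pos one_pos (div_pos hz hn))
  have rescale : n * (1 + z / n) = z + n := by field_simp; ring
  rw [← shift z hz, ← g_eq, ← exp_nat_mul, ← exp_add, rescale, ← exp_log (pos n hn), ← exp_add,
    log_exp]
  refine (exp_log (pos _ (by positivity))).symm.trans (congrArg exp ?_)
  field_simp
  ring

end LaplaceTransform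

section CyclicChainTransform

open Asymptotics MeasureTheory

variable {u v : ℝ → ℝ} {z : ℝ}

lemma integrable_and_integral_eq_of_hasDerivAt (hu : ∀ a, HasDerivAt u (z * u a - v a) a)
    (u_nonneg : ∀ a, 0 ≤ u a) (v_nonneg : ∀ a, 0 ≤ v a) (hv : Continuous v) (hi : Integrable u)
    (bounded : u =O[atBot] (fun _ => (1 : ℝ))) : Integrable v ∧ ∫ a, v a = z * ∫ a, u a := by
  have hu_cont : Continuous u := continuous_iff_continuousAt.2 fun a => (hu a).continuousAt
  have hzu := hi.const_mul z
  obtain ⟨C, hC⟩ := bounded.bound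
  have integrable : Integrable v := by
    refine integrable_of_intervalIntegral_norm_bounded (l := atTop) (a := fun T : ℝ => -T)
      (b := fun T => T) (C + ∫ a, ‖z * u a‖)
      (fun T => hv.continuousOn.integrableOn_Icc.mono_set Set.Ioc_subset_Icc_self)
      tendsto_neg_atTop_atBot tendsto_id ?_
    filter_upwards [eventually_ge_atTop 0, tendsto_neg_atTop_atBot.eventually hC] with T hT hCT
    have ftc : ∫ a in (-T)..T, (z * u a - v a) = u T - u (-T) :=
      intervalIntegral.integral_eq_sub_of_hasDerivAt (fun a _ => hu a)
        (((hu_cont.const_mul z).sub hv).intervalIntegrable _ _)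
    rw [intervalIntegral.integral_sub ((hu_cont.const_mul z).intervalIntegrable _ _)
      (hv.intervalIntegrable _ _)] at ftc
    have le_norm : ∫ a in (-T)..T, z * u a ≤ ∫ a, ‖z * u a‖ := by
      rw [intervalIntegral.integral_of_le (by linarith)]
      exact (setIntegral_mono hzu.integrableOn hzu.norm.integrableOn fun a => le_norm_self _).trans
        (setIntegral_le_integral hzu.norm (.of_forall fun _ => norm_nonneg _))
    simp only [norm_of_nonneg (v_nonneg _)]
    rw [norm_of_nonneg (u_nonneg _), norm_one, mul_one] at hCT
    linarith [u_nonneg T]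
  have total := integral_eq_zero_of_hasDerivAt_of_integrable hu (hzu.sub integrable) hi
  rw [integral_sub hzu integrable, integral_const_mul] at total
  exact ⟨integrable, by linarith⟩

namespace IsCyclicChain

variable {n : ℕ} [NeZero n] {H : ℝ → Fin n → ℝ} (h : IsCyclicChain H)
include h

lemma transform_step (hz : 0 < z) (i : Fin n) (hi : Integrable fun a => exp (z * a) * H a i) :
    Integrable (fun a => exp (z * a) * (cyclicWeight (i + 1) a * H a (i + 1))) ∧
      ∫ a, exp (z * a) * (cyclicWeight (i + 1) a * H a (i + 1)) =
        z * ∫ a, exp (z * a) * H a i := by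
  have := h.continuous (i + 1)
  have := continuous_cyclicWeight (i + 1)
  refine integrable_and_integral_eq_of_hasDerivAt
    (fun a => ((hasDerivAt_exp_mul z a).fun_mul (h.hasDerivAt a i)).congr_deriv (by ring))
    (fun a => mul_nonneg (exp_pos _).le (h.nonneg a i))
    (fun a => mul_nonneg (exp_pos _).le (mul_nonneg (cyclicWeight_pos _ a).le (h.nonneg a _)))
    (by fun_prop) hi ?_
  refine ((isBigO_refl _ _).mul (h.isBigO_exp hz i)).congr_right fun a => ?_
  rw [← exp_add, add_neg_cancel, exp_zero]

lemma laplaceTransform_add (hz : 0 < z) (hi : Integrable fun a => exp (z * a) * H a 0) :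
    Integrable (fun a => exp ((z + n) * a) * H a 0) ∧
      laplaceTransform (H · 0) (z + n) = z ^ n * laplaceTransform (H · 0) z := by
  obtain ⟨m, rfl⟩ := Nat.exists_eq_succ_of_ne_zero (NeZero.ne n)
  have iterate : ∀ i : Fin (m + 1), Integrable (fun a => exp (z * a) * H a i) ∧
      ∫ a, exp (z * a) * H a i = z ^ (i : ℕ) * laplaceTransform (H · 0) z := fun i => by
    induction i using Fin.induction with
    | zero => exact ⟨hi, (one_mul _).symm⟩
    | succ i ih =>
      have := h.transform_step hz i.castSucc ih.1
      simp only [Fin.coeSucc_eq_succ, cyclicWeight, Fin.succ_ne_zero, if_false, one_mul] at this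
      exact ⟨this.1, by rw [this.2, ih.2, Fin.val_succ, Fin.val_castSucc, pow_succ']; ring⟩
  have last := h.transform_step hz (Fin.last m) (iterate _).1
  simp only [Fin.last_add_one, cyclicWeight, if_true, ← mul_assoc, ← exp_add, ← add_mul] at last
  exact ⟨last.1, last.2.trans (by rw [(iterate _).2, Fin.val_last, pow_succ']; ring)⟩

lemma integrableOn_Ioi_exp_mul : IntegrableOn (fun a => exp (n * a) * H a 0) (Set.Ioi 0) := by
  obtain ⟨m, rfl⟩ := Nat.exists_eq_succ_of_ne_zero (NeZero.ne n)
  have bddBelow : BddBelow (Set.range (H · (Fin.last m))) :=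
    ⟨0, Set.forall_mem_range.2 fun a => h.nonneg a _⟩
  have deriv : ∀ a, HasDerivAt (H · (Fin.last m)) (-(exp ((m + 1 : ℕ) * a) * H a 0)) a := fun a =>
    (h.hasDerivAt a (Fin.last m)).congr_deriv (by rw [Fin.last_add_one, cyclicWeight, if_pos rfl])
  refine IntegrableOn.congr_fun (integrableOn_Ioi_deriv_of_nonpos' (fun a _ => deriv a)
    (fun a _ => neg_nonpos.2 (mul_nonneg (exp_pos _).le (h.nonneg a 0)))
    (tendsto_atTop_ciInf (h.antitone _) bddBelow)).neg (fun a _ => neg_neg _)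
    measurableSet_Ioi

lemma integrable_exp_mul_of_le (hz : 0 < z) (hzn : z ≤ n) :
    Integrable fun a => exp (z * a) * H a 0 := by
  have := h.continuous 0
  have continuous : Continuous fun a => exp (z * a) * H a 0 := by fun_prop
  have bigO : (fun a => exp (z * a) * H a 0) =O[atBot] fun a => exp (z / 2 * a) :=
    ((isBigO_refl _ _).mul (h.isBigO_exp (half_pos hz) 0)).congr_right fun a => by
      rw [← exp_add]
      ring_nf
  have left := (continuous.locallyIntegrable.locallyIntegrableOn (Set.Iic 0))
    |>.integrableOn_of_isBigO_atBot bigO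
      ⟨Set.Iic 0, Iic_mem_atBot 0, integrableOn_exp_mul_Iic (half_pos hz) 0⟩
  have right : IntegrableOn (fun a => exp (z * a) * H a 0) (Set.Ioi 0) :=
    Integrable.mono' h.integrableOn_Ioi_exp_mul continuous.aestronglyMeasurable <|
      (ae_restrict_mem measurableSet_Ioi).mono fun a (ha : 0 < a) => by
        have := h.nonneg a 0
        rw [norm_of_nonneg (mul_nonneg (exp_pos _).le this)]
        gcongr
  rw [← integrableOn_univ, ← Set.Iic_union_Ioi]
  exact left.union right

lemma integrable_exp_mul (hz : 0 < z) : Integrable fun a => exp (z * a) * H a 0 := by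
  have up_to : ∀ k : ℕ, ∀ z : ℝ, 0 < z → z ≤ n * (k + 1) →
      Integrable fun a => exp (z * a) * H a 0 := fun k => by
    induction k with
    | zero => exact fun z hz le => h.integrable_exp_mul_of_le hz (by simpa using le)
    | succ k ih =>
      intro z hz le
      rcases le_or_gt z n with hzn | hzn
      · exact h.integrable_exp_mul_of_le hz hzn
      · push_cast at le
        simpa only [sub_add_cancel] using (h.laplaceTransform_add (z := z - n) (by linarith)
          (ih (z - n) (by linarith) (by linarith))).1
  obtain ⟨k, hk⟩ := exists_nat_ge z
  have hn : (1 : ℝ) ≤ n := Nat.one_le_cast.2 NeZero.one_le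
  exact up_to k z hz (by nlinarith)

theorem laplaceTransform_eq_Gamma (pos : 0 < ∑ i, H 0 i) (hz : 0 < z) :
    z ^ n * laplaceTransform (H · 0) z =
      laplaceTransform (H · 0) n * (exp (z * log n) * Gamma (1 + z / n) ^ n) := by
  have m_pos : ∀ z, 0 < z → 0 < laplaceTransform (H · 0) z := fun z hz =>
    laplaceTransform_pos (h.continuous 0) (h.nonneg · 0) (h.exists_zero_pos pos)
      (h.integrable_exp_mul hz)
  exact pow_mul_eq_of_log_convexOn m_pos
    (convexOn_log_laplaceTransform (convex_Ioi 0) (h.nonneg · 0)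
      (fun z hz => h.integrable_exp_mul hz) m_pos)
    (fun z hz => (h.laplaceTransform_add hz (h.integrable_exp_mul hz)).2) hz

end IsCyclicChain

end CyclicChainTransform

section LogGamma

open Asymptotics

local notation "γ" => eulerMascheroniConstant

lemma logGammaSeq_add_log (x : ℝ) (hx : 0 < x) (n : ℕ) :
    BohrMollerup.logGammaSeq x n + log x + (harmonic n - log n) * x =
      ∑ m ∈ Finset.range n, (x / (m + 1) - log (1 + x / (m + 1))) := by
  have log_factorial : log (n.factorial : ℝ) = ∑ m ∈ Finset.range n, log ((m : ℝ) + 1) := by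
    rw [← Finset.prod_range_add_one_eq_factorial]
    push_cast
    exact log_prod fun m _ => by positivity
  have harmonic_eq : (harmonic n : ℝ) = ∑ m ∈ Finset.range n, ((m : ℝ) + 1)⁻¹ := by
    simp only [harmonic, Rat.cast_sum, Rat.cast_inv, Rat.cast_natCast, ← Nat.cast_add_one]
  have log_one_add : ∀ m : ℕ, log (1 + x / (m + 1)) = log (x + (m + 1)) - log (m + 1) := fun m => by
    rw [← log_div (by positivity) (by positivity)]
    congr 1
    field_simp
    ring
  simp only [BohrMollerup.logGammaSeq, Finset.sum_range_succ', log_factorial, harmonic_eq,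
    log_one_add, Finset.sum_sub_distrib, Nat.cast_add, Nat.cast_one, Nat.cast_zero, add_zero]
  simp only [div_eq_mul_inv, ← Finset.mul_sum]
  ring

lemma hasSum_log_Gamma_one_add {x : ℝ} (hx : 0 < x) :
    HasSum (fun m : ℕ => x / (m + 1) - log (1 + x / (m + 1))) (log (Gamma (1 + x)) + γ * x) := by
  have nonneg : ∀ m : ℕ, 0 ≤ x / (m + 1) - log (1 + x / (m + 1)) := fun m => by
    linarith [log_le_sub_one_of_pos (by positivity : 0 < 1 + x / ((m : ℝ) + 1))]
  rw [hasSum_iff_tendsto_nat_of_nonneg nonneg, add_comm 1 x, Gamma_add_one hx.ne',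
    log_mul hx.ne' (Gamma_pos_of_pos hx).ne', add_comm (log x)]
  exact (((BohrMollerup.tendsto_log_gamma hx).add_const (log x)).add
    (tendsto_harmonic_sub_log.mul_const x)).congr (logGammaSeq_add_log x hx)

lemma abs_sub_log_one_add_sub_le {y : ℝ} (hy : 0 ≤ y) (hy' : y ≤ 1 / 2) :
    |y - log (1 + y) - (y ^ 2 / 2 - y ^ 3 / 3)| ≤ 2 * y ^ 4 := by
  have abs_lt : |(-y)| < 1 := by
    rw [abs_neg, abs_of_nonneg hy]
    linarith
  have taylor := abs_log_sub_add_sum_range_le abs_lt 3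
  rw [abs_neg, abs_of_nonneg hy] at taylor
  have remainder : y ^ (3 + 1) / (1 - y) ≤ 2 * y ^ 4 := by
    rw [div_le_iff₀ (by linarith), show 3 + 1 = 4 from rfl]
    linarith [mul_nonneg (pow_nonneg hy 4) (sub_nonneg.2 hy')]
  rw [← abs_neg]
  refine (congrArg abs ?_).trans_le (taylor.trans remainder)
  simp only [Finset.sum_range_succ, Finset.sum_range_zero, Nat.cast_zero, Nat.cast_one,
    Nat.cast_ofNat, sub_neg_eq_add]
  ring

lemma exists_log_Gamma_one_add_isBigO : ∃ A : ℝ,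
    (fun x => log (Gamma (1 + x)) - (-(γ * x) + A * x ^ 2 - zetaThree / 3 * x ^ 3))
      =O[𝓝[>] 0] fun x => x ^ 4 := by
  have summable : ∀ k : ℕ, 1 < k → Summable fun m : ℕ => 1 / ((m : ℝ) + 1) ^ k := fun k hk => by
    simpa only [Nat.cast_add, Nat.cast_one] using
      (summable_nat_add_iff 1).2 (summable_one_div_nat_pow.2 hk)
  have hasSum_pow : ∀ k : ℕ, 1 < k → ∀ x : ℝ, HasSum (fun m : ℕ => (x / ((m : ℝ) + 1)) ^ k)
      ((∑' m : ℕ, 1 / ((m : ℝ) + 1) ^ k) * x ^ k) := fun k hk x =>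
    ((summable k hk).hasSum.mul_right (x ^ k)).congr_fun fun m => by
      rw [div_pow, one_div_mul_eq_div]
  refine ⟨(∑' m : ℕ, 1 / ((m : ℝ) + 1) ^ 2) / 2, .of_bound (2 * ∑' m : ℕ, 1 / ((m : ℝ) + 1) ^ 4) ?_⟩
  filter_upwards [Ioc_mem_nhdsGT (one_half_pos (α := ℝ))] with x hx
  have remainder := ((hasSum_log_Gamma_one_add hx.1).sub
    (((hasSum_pow 2 one_lt_two x).div_const 2).sub ((hasSum_pow 3 (by norm_num) x).div_const 3)))
    |>.norm_le_of_bounded ((hasSum_pow 4 (by norm_num) x).mul_left 2) fun m =>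
      abs_sub_log_one_add_sub_le (div_nonneg hx.1.le (by positivity))
        ((div_le_self hx.1.le (by linarith [m.cast_nonneg (α := ℝ)])).trans hx.2)
  rw [norm_of_nonneg (pow_nonneg hx.1.le 4), mul_assoc]
  refine (congrArg _ ?_).trans_le remainder
  unfold zetaThree
  ring

end LogGamma

section Watson

open Asymptotics MeasureTheory

lemma integral_Iic_exp_mul_pow_div_factorial {z : ℝ} (hz : 0 < z) (k : ℕ) :
    ∫ a in Set.Iic 0, exp (z * a) * ((-a) ^ k / k.factorial) = 1 / z ^ (k + 1) := by
  have reflected := integral_comp_neg_Iic 0 fun t => exp (-(z * t)) * (t ^ k / k.factorial)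
  simp only [mul_neg, neg_neg, neg_zero] at reflected
  have gamma := integral_rpow_mul_exp_neg_mul_Ioi (a := k + 1) (by positivity) hz
  simp only [add_sub_cancel_right, rpow_natCast, Gamma_nat_eq_factorial,
    mul_comm _ (exp _)] at gamma
  simp only [← mul_div_assoc] at reflected ⊢
  rw [reflected, integral_div, gamma, mul_div_assoc, div_self (by positivity), mul_one,
    ← Nat.cast_add_one, rpow_natCast, one_div_pow]

lemma integrableOn_Iic_exp_mul_pow_div_factorial {z : ℝ} (hz : 0 < z) (k : ℕ) :
    IntegrableOn (fun a => exp (z * a) * ((-a) ^ k / k.factorial)) (Set.Iic 0) := by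
  refine .of_integral_ne_zero ?_
  rw [integral_Iic_exp_mul_pow_div_factorial hz k]
  positivity

lemma integral_Iic_exp_mul_isBigO_one {g : ℝ → ℝ} (hg : IntegrableOn g (Set.Iic 0)) :
    (fun z => ∫ a in Set.Iic 0, exp (z * a) * g a) =O[𝓝[>] 0] fun _ => (1 : ℝ) := by
  refine .of_bound (∫ a in Set.Iic 0, ‖g a‖)
    (eventually_mem_nhdsWithin.mono fun z (hz : 0 < z) => ?_)
  rw [norm_one, mul_one]
  refine norm_integral_le_of_norm_le hg.norm
    ((ae_restrict_mem measurableSet_Iic).mono fun a ha => ?_)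
  rw [norm_mul, norm_of_nonneg (exp_pos _).le]
  exact mul_le_of_le_one_left (norm_nonneg _)
    (exp_le_one_iff.2 (mul_nonpos_of_nonneg_of_nonpos hz.le ha))

lemma integral_Ioi_exp_mul_isBigO_one {f : ℝ → ℝ} {c : ℝ} (hc : 0 < c)
    (hf : IntegrableOn (fun a => exp (c * a) * f a) (Set.Ioi 0)) :
    (fun z => ∫ a in Set.Ioi 0, exp (z * a) * f a) =O[𝓝[>] 0] fun _ => (1 : ℝ) := by
  refine .of_bound (∫ a in Set.Ioi 0, ‖exp (c * a) * f a‖) ?_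
  filter_upwards [mem_nhdsWithin_of_mem_nhds (Iio_mem_nhds hc)] with z (hz : z < c)
  rw [norm_one, mul_one]
  refine norm_integral_le_of_norm_le hf.norm ((ae_restrict_mem measurableSet_Ioi).mono ?_)
  intro a (ha : 0 < a)
  rw [norm_mul, norm_mul, norm_of_nonneg (exp_pos _).le, norm_of_nonneg (exp_pos _).le]
  gcongr

theorem laplaceTransform_sub_isBigO_one {f : ℝ → ℝ} {c : ℝ} {N : ℕ} (q : Fin N → ℝ) (hc : 0 < c)
    (hf : Continuous f) (integrable : ∀ z, 0 < z → Integrable fun a => exp (z * a) * f a)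
    (expansion : (fun a => f a - ∑ k, q k * ((-a) ^ (k : ℕ) / (k : ℕ).factorial))
      =O[atBot] fun a => exp (c * a)) :
    (fun z => laplaceTransform f z - ∑ k, q k * (1 / z ^ ((k : ℕ) + 1)))
      =O[𝓝[>] 0] fun _ => (1 : ℝ) := by
  set p : ℝ → ℝ := fun a => ∑ k, q k * ((-a) ^ (k : ℕ) / (k : ℕ).factorial)
  have hp : Continuous p := by fun_prop
  have remainder : IntegrableOn (fun a => f a - p a) (Set.Iic 0) :=
    ((hf.sub hp).locallyIntegrable.locallyIntegrableOn _).integrableOn_of_isBigO_atBot expansion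
      ⟨Set.Iic 0, Iic_mem_atBot 0, integrableOn_exp_mul_Iic hc 0⟩
  refine ((integral_Iic_exp_mul_isBigO_one remainder).add (integral_Ioi_exp_mul_isBigO_one hc
    (integrable c hc).integrableOn)).congr'
    (eventually_mem_nhdsWithin.mono fun z (hz : 0 < z) => ?_) .rfl
  have main_integrable : ∀ k ∈ Finset.univ, IntegrableOn
      (fun a => q k * (exp (z * a) * ((-a) ^ (k : ℕ) / (k : ℕ).factorial))) (Set.Iic 0) :=
    fun k _ => (integrableOn_Iic_exp_mul_pow_div_factorial hz k).const_mul (q k)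
  have main : ∫ a in Set.Iic 0, exp (z * a) * p a = ∑ k, q k * (1 / z ^ ((k : ℕ) + 1)) := by
    simp only [p, Finset.mul_sum, mul_left_comm (exp _)]
    rw [integral_finsetSum _ main_integrable]
    simp only [integral_const_mul, integral_Iic_exp_mul_pow_div_factorial hz]
  have p_integrable : IntegrableOn (fun a => exp (z * a) * p a) (Set.Iic 0) := by
    simp only [p, Finset.mul_sum, mul_left_comm (exp _)]
    exact integrable_finsetSum _ main_integrable
  have hfz := integrable z hz
  simp only [mul_sub]
  rw [integral_sub hfz.integrableOn p_integrable, main, laplaceTransform,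
    ← intervalIntegral.integral_Iic_add_Ioi hfz.integrableOn hfz.integrableOn (b := 0)]
  ring

end Watson

section CubicExpansion

open Asymptotics

lemma eq_zero_and_isBigO_pow_of_add_mul {c : ℝ} {g : ℝ → ℝ} {k : ℕ} (hg : ContinuousAt g 0)
    (bigO : (fun z => c + z * g z) =O[𝓝[>] 0] fun z => z ^ (k + 1)) :
    c = 0 ∧ g =O[𝓝[>] 0] fun z => z ^ k := by
  have lim : Tendsto (fun z => c + z * g z) (𝓝[>] 0) (𝓝 (c + 0 * g 0)) :=
    (continuousAt_const.add (continuousAt_id.mul hg)).tendsto.mono_left nhdsWithin_le_nhds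
  have pow_lim : Tendsto (fun z : ℝ => z ^ (k + 1)) (𝓝[>] 0) (𝓝 (0 ^ (k + 1))) :=
    (continuous_pow (k + 1)).continuousAt.tendsto.mono_left nhdsWithin_le_nhds
  rw [zero_pow k.succ_ne_zero] at pow_lim
  have hc : c = 0 := by
    rw [← tendsto_nhds_unique lim (bigO.trans_tendsto pow_lim), zero_mul, add_zero]
  subst hc
  refine ⟨rfl, ((isBigO_refl (fun z : ℝ => z⁻¹) _).mul bigO).congr' ?_ ?_⟩ <;>
    refine eventually_mem_nhdsWithin.mono fun z (hz : 0 < z) => ?_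
  · simp only [zero_add, inv_mul_cancel_left₀ hz.ne']
  · simp only [pow_succ', inv_mul_cancel_left₀ hz.ne']

lemma cubic_coeffs_eq_zero_of_isBigO {c₀ c₁ c₂ c₃ : ℝ}
    (bigO : (fun z => c₀ + c₁ * z + c₂ * z ^ 2 + c₃ * z ^ 3) =O[𝓝[>] 0] fun z => z ^ 4) :
    c₀ = 0 ∧ c₁ = 0 ∧ c₂ = 0 ∧ c₃ = 0 := by
  have horner : (fun z => c₀ + z * (c₁ + z * (c₂ + z * (c₃ + z * 0)))) =O[𝓝[>] 0] fun z => z ^ 4 :=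
    bigO.congr_left fun z => by ring
  obtain ⟨h₀, horner⟩ := eq_zero_and_isBigO_pow_of_add_mul (by fun_prop) horner
  obtain ⟨h₁, horner⟩ := eq_zero_and_isBigO_pow_of_add_mul (by fun_prop) horner
  obtain ⟨h₂, horner⟩ := eq_zero_and_isBigO_pow_of_add_mul (by fun_prop) horner
  obtain ⟨h₃, -⟩ := eq_zero_and_isBigO_pow_of_add_mul (by fun_prop) horner
  exact ⟨h₀, h₁, h₂, h₃⟩

lemma exp_sub_taylor_isBigO :
    (fun x => exp x - (1 + x + x ^ 2 / 2 + x ^ 3 / 6)) =O[𝓝 0] fun x => x ^ 4 := by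
  refine .of_bound (5 / 96) (eventually_abs_sub_lt 0 one_pos |>.mono fun x hx => ?_)
  rw [sub_zero] at hx
  have := exp_bound hx.le (n := 4) (by norm_num)
  norm_num only [Finset.sum_range_succ, Finset.sum_range_zero, Nat.factorial, pow_zero, pow_one,
    zero_add, div_one] at this
  rw [norm_eq_abs, norm_eq_abs, abs_pow]
  linarith

lemma mul_pow_isBigO {g : ℝ → ℝ} (hg : ContinuousAt g 0) (k : ℕ) :
    (fun z => g z * z ^ k) =O[𝓝[>] 0] fun z => z ^ k := by
  simpa only [one_mul] using
    ((hg.tendsto.isBigO_one ℝ).mono nhdsWithin_le_nhds).mul (isBigO_refl (fun z : ℝ => z ^ k) _)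

lemma exp_cubic_sub_isBigO (p c₂ c₃ : ℝ) :
    (fun z => exp (p * z + c₂ * z ^ 2 + c₃ * z ^ 3) - (1 + p * z + (p ^ 2 / 2 + c₂) * z ^ 2 +
      (p ^ 3 / 6 + p * c₂ + c₃) * z ^ 3)) =O[𝓝[>] 0] fun z => z ^ 4 := by
  let e : ℝ → ℝ := fun z => p * z + c₂ * z ^ 2 + c₃ * z ^ 3
  have e_lim : Tendsto e (𝓝[>] 0) (𝓝 0) := by
    have : Continuous e := by fun_prop
    simpa [e] using this.continuousAt.tendsto.mono_left (nhdsWithin_le_nhds (a := (0 : ℝ)))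
  have e_pow : (fun z => e z ^ 4) =O[𝓝[>] 0] fun z => z ^ 4 :=
    (mul_pow_isBigO (g := fun z => (p + c₂ * z + c₃ * z ^ 2) ^ 4) (by fun_prop) 4).congr_left
      fun z => by ring
  have high_order := mul_pow_isBigO
    (g := fun z => p * c₃ + c₂ ^ 2 / 2 + c₂ * c₃ * z + c₃ ^ 2 * z ^ 2 / 2 + p ^ 2 * c₂ / 2 +
      p * c₂ ^ 2 / 2 * z + c₂ ^ 3 / 6 * z ^ 2 + p ^ 2 * c₃ / 2 * z + c₂ ^ 2 * c₃ / 2 * z ^ 3 +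
      p * c₃ ^ 2 / 2 * z ^ 3 + c₂ * c₃ ^ 2 / 2 * z ^ 4 + c₃ ^ 3 / 6 * z ^ 5 + p * c₂ * c₃ * z ^ 2)
    (by fun_prop) 4
  exact (((exp_sub_taylor_isBigO.comp_tendsto e_lim).trans e_pow).add high_order).congr_left
    fun z => by simp only [Function.comp_apply, e]; ring

lemma exp_sub_cubic_isBigO {E : ℝ → ℝ} {p c₂ c₃ : ℝ}
    (hE : (fun z => E z - (p * z + c₂ * z ^ 2 + c₃ * z ^ 3)) =O[𝓝[>] 0] fun z => z ^ 4) :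
    (fun z => exp (E z) - (1 + p * z + (p ^ 2 / 2 + c₂) * z ^ 2 +
      (p ^ 3 / 6 + p * c₂ + c₃) * z ^ 3)) =O[𝓝[>] 0] fun z => z ^ 4 := by
  let e : ℝ → ℝ := fun z => p * z + c₂ * z ^ 2 + c₃ * z ^ 3
  have exp_e_isBigO : (fun z => exp (e z)) =O[𝓝[>] 0] fun _ => (1 : ℝ) := by
    have : Continuous fun z => exp (e z) := by fun_prop
    exact (this.continuousAt.tendsto.isBigO_one ℝ).mono nhdsWithin_le_nhds
  have pow_lim : Tendsto (fun z : ℝ => z ^ 4) (𝓝[>] 0) (𝓝 0) := by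
    simpa using (continuous_pow 4).continuousAt.tendsto.mono_left
      (nhdsWithin_le_nhds (a := (0 : ℝ)))
  have exp_diff : (fun z => exp (E z - e z) - 1) =O[𝓝[>] 0] fun z => z ^ 4 := by
    simpa only [Function.comp_def, exp_zero, sub_zero] using
      ((hasDerivAt_exp 0).isBigO_sub.comp_tendsto (hE.trans_tendsto pow_lim)).trans
        (hE.congr_left fun z => by simp only [Function.comp_apply, sub_zero])
  have exp_sub : (fun z => exp (E z) - exp (e z)) =O[𝓝[>] 0] fun z => z ^ 4 := by
    refine (exp_e_isBigO.mul exp_diff).congr (fun z => ?_) fun z => one_mul _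
    rw [mul_sub, ← exp_add, add_sub_cancel, mul_one]
  exact (exp_sub.add (exp_cubic_sub_isBigO p c₂ c₃)).congr_left fun z => by ring

end CubicExpansion

section ChainAsymptotics

open Asymptotics

lemma exists_isBigO_sub_add_of_hasDerivAt_neg {D P G p : ℝ → ℝ} {c : ℝ} (hc : 0 < c)
    (hD : ∀ t, HasDerivAt D (-G t) t) (hP : ∀ t, HasDerivAt P (-p t) t)
    (bigO : (fun t => G t - p t) =O[atBot] fun t => exp (c * t)) :
    ∃ l, (fun t => D t - (l + P t)) =O[atBot] fun t => exp (c * t) := by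
  obtain ⟨l, hl⟩ := exists_isBigO_sub_of_deriv_isBigO_exp hc (fun t => (hD t).sub (hP t))
    (bigO.neg_left.congr_left fun t => by ring)
  exact ⟨l, hl.congr_left fun t => by simp only [Pi.sub_apply]; ring⟩

variable {H : ℝ → Fin 4 → ℝ}

lemma IsCyclicChain.exists_isBigO_sub_cubic (hH : IsCyclicChain H) : ∃ q : Fin 4 → ℝ,
    (fun a => H a 2 - (q 2 - q 3 * a)) =O[atBot] (fun a => exp (3 * a)) ∧
    (fun a => H a 1 - (q 1 - q 2 * a + q 3 * a ^ 2 / 2)) =O[atBot] (fun a => exp (3 * a)) ∧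
    (fun a => H a 0 - (q 0 - q 1 * a + q 2 * a ^ 2 / 2 - q 3 * a ^ 3 / 6)) =O[atBot]
      fun a => exp (3 * a) := by
  have deriv₃ : ∀ t, HasDerivAt (H · 3) (-(exp (4 * t) * H t 0)) t := fun t => by
    simpa [cyclicWeight] using hH.hasDerivAt t 3
  have deriv₂ : ∀ t, HasDerivAt (H · 2) (-H t 3) t := fun t => by
    simpa [cyclicWeight] using hH.hasDerivAt t 2
  have deriv₁ : ∀ t, HasDerivAt (H · 1) (-H t 2) t := fun t => by
    simpa [cyclicWeight] using hH.hasDerivAt t 1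
  have deriv₀ : ∀ t, HasDerivAt (H · 0) (-H t 1) t := fun t => by
    simpa [cyclicWeight] using hH.hasDerivAt t 0
  have bigO₃ : (fun t => exp (4 * t) * H t 0 - 0) =O[atBot] fun t => exp (3 * t) :=
    ((isBigO_refl (fun t => exp (4 * t)) _).mul (hH.isBigO_exp one_pos 0)).congr
      (fun t => (sub_zero _).symm) fun t => by rw [← exp_add]; ring_nf
  obtain ⟨q₃, h₃⟩ := exists_isBigO_sub_add_of_hasDerivAt_neg three_pos deriv₃
    (P := fun _ => 0) (fun t => by simpa using hasDerivAt_const t (0 : ℝ)) bigO₃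
  obtain ⟨q₂, h₂⟩ := exists_isBigO_sub_add_of_hasDerivAt_neg three_pos deriv₂
    (P := fun t => -(q₃ * t)) (fun t => by
      convert! ((hasDerivAt_id t).const_mul q₃).neg using 1
      simp only [mul_one, add_zero]) h₃
  obtain ⟨q₁, h₁⟩ := exists_isBigO_sub_add_of_hasDerivAt_neg three_pos deriv₁
    (P := fun t => -(q₂ * t) + q₃ * t ^ 2 / 2) (fun t => by
      convert! ((hasDerivAt_id t).const_mul q₂).neg.add
        (((hasDerivAt_pow 2 t).const_mul q₃).div_const 2) using 1
      simp only [Nat.cast_ofNat, Nat.add_one_sub_one]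
      ring) h₂
  obtain ⟨q₀, h₀⟩ := exists_isBigO_sub_add_of_hasDerivAt_neg three_pos deriv₀
    (P := fun t => -(q₁ * t) + q₂ * t ^ 2 / 2 - q₃ * t ^ 3 / 6) (fun t => by
      convert! (((hasDerivAt_id t).const_mul q₁).neg.add
        (((hasDerivAt_pow 2 t).const_mul q₂).div_const 2)).sub
        (((hasDerivAt_pow 3 t).const_mul q₃).div_const 6) using 1
      simp only [Nat.cast_ofNat, Nat.add_one_sub_one]
      ring) h₁
  refine ⟨![q₀, q₁, q₂, q₃], h₂.congr_left fun t => ?_, h₁.congr_left fun t => ?_,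
    h₀.congr_left fun t => ?_⟩ <;>
    simp only [Matrix.cons_val] <;> ring

lemma IsCyclicChain.pow_four_mul_laplaceTransform_isBigO (hH : IsCyclicChain H) {q : Fin 4 → ℝ}
    (expansion : (fun a => H a 0 - (q 0 - q 1 * a + q 2 * a ^ 2 / 2 - q 3 * a ^ 3 / 6))
      =O[atBot] fun a => exp (3 * a)) :
    (fun z => z ^ 4 * laplaceTransform (H · 0) z -
      (q 3 + q 2 * z + q 1 * z ^ 2 + q 0 * z ^ 3)) =O[𝓝[>] 0] fun z => z ^ 4 := by
  have watson := laplaceTransform_sub_isBigO_one q three_pos (hH.continuous 0)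
    (fun z hz => hH.integrable_exp_mul hz) (expansion.congr_left fun a => by
      norm_num [Fin.sum_univ_four, Nat.factorial]
      ring)
  refine ((isBigO_refl (fun z : ℝ => z ^ 4) _).mul watson).congr'
    (eventually_mem_nhdsWithin.mono fun z (hz : 0 < z) => ?_) (.of_forall fun z => mul_one _)
  simp only [Fin.sum_univ_four, Fin.coe_ofNat_eq_mod, Nat.reduceMod]
  field_simp
  ring

lemma exists_exp_mul_Gamma_pow_isBigO : ∃ c, (fun z => exp (z * log 4) * Gamma (1 + z / 4) ^ 4 -
    (1 + (log 4 - eulerMascheroniConstant) * z +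
      ((log 4 - eulerMascheroniConstant) ^ 2 / 2 + c) * z ^ 2 +
      ((log 4 - eulerMascheroniConstant) ^ 3 / 6 + (log 4 - eulerMascheroniConstant) * c
        + -(zetaThree / 48)) * z ^ 3)) =O[𝓝[>] 0] fun z => z ^ 4 := by
  obtain ⟨A, hA⟩ := exists_log_Gamma_one_add_isBigO
  have quarter_lim : Tendsto (fun z : ℝ => z / 4) (𝓝[>] 0) (𝓝[>] 0) := by
    refine tendsto_nhdsWithin_iff.mpr ⟨?_, eventually_mem_nhdsWithin.mono fun z (hz : 0 < z) =>
      div_pos hz four_pos⟩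
    simpa using (tendsto_id (x := 𝓝 (0 : ℝ))).div_const 4 |>.mono_left nhdsWithin_le_nhds
  have log_expansion : (fun z => z * log 4 + 4 * log (Gamma (1 + z / 4)) -
      ((log 4 - eulerMascheroniConstant) * z + A / 4 * z ^ 2 + -(zetaThree / 48) * z ^ 3))
      =O[𝓝[>] 0] fun z => z ^ 4 := by
    refine ((hA.comp_tendsto quarter_lim).const_mul_left 4).congr_left (fun z => ?_) |>.trans
      (.of_bound 1 (.of_forall fun z => ?_))
    · simp only [Function.comp_apply]; ring
    · simp only [Function.comp_apply, div_pow, norm_div, norm_pow, one_mul]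
      exact div_le_self (by positivity) (by norm_num)
  refine ⟨A / 4, (exp_sub_cubic_isBigO log_expansion).congr' ?_ .rfl⟩
  refine eventually_mem_nhdsWithin.mono fun z (hz : 0 < z) => ?_
  have Gamma_pos : 0 < Gamma (1 + z / 4) := Gamma_pos_of_pos (by positivity)
  have exp_log_Gamma : exp (4 * log (Gamma (1 + z / 4))) = Gamma (1 + z / 4) ^ 4 := by
    simpa only [exp_log Gamma_pos, Nat.cast_ofNat] using exp_nat_mul (log (Gamma (1 + z / 4))) 4
  simp only [exp_add, exp_log_Gamma]

/-- The cubic `t³ + α t + ζ(3)/8` governing the first entry of a cyclic chain of length `4` at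
`-∞`, in the variable `t = a - (log 4 - γ)`. -/
noncomputable def limitCubic (α t : ℝ) : ℝ := t ^ 3 + α * t + zetaThree / 8

lemma IsCyclicChain.exists_isBigO_limitCubic (hH : IsCyclicChain H) (pos : 0 < ∑ i, H 0 i)
    {p : ℝ} (hp : p = log 4 - eulerMascheroniConstant) : ∃ α κ, 0 < κ ∧
    (fun a => H a 0 + κ * limitCubic α (a - p)) =O[atBot] (fun a => exp (3 * a)) ∧
    (fun a => H a 1 - κ * (3 * (a - p) ^ 2 + α)) =O[atBot] (fun a => exp (3 * a)) ∧
    (fun a => H a 2 + κ * (6 * (a - p))) =O[atBot] fun a => exp (3 * a) := by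
  obtain ⟨q, bigO₂, bigO₁, bigO₀⟩ := hH.exists_isBigO_sub_cubic
  obtain ⟨c, hc⟩ := exists_exp_mul_Gamma_pow_isBigO
  rw [← hp] at hc
  set M := laplaceTransform (H · 0) 4
  have M_pos : 0 < M := laplaceTransform_pos (hH.continuous 0) (hH.nonneg · 0)
    (hH.exists_zero_pos pos) (hH.integrable_exp_mul four_pos)
  obtain ⟨h₀, h₁, h₂, h₃⟩ : q 3 - M = 0 ∧ q 2 - M * p = 0 ∧ q 1 - M * (p ^ 2 / 2 + c) = 0 ∧
      q 0 - M * (p ^ 3 / 6 + p * c + -(zetaThree / 48)) = 0 := by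
    refine cubic_coeffs_eq_zero_of_isBigO (((hc.const_mul_left M).sub
      (hH.pow_four_mul_laplaceTransform_isBigO bigO₀)).congr' ?_ .rfl)
    refine eventually_mem_nhdsWithin.mono fun z (hz : 0 < z) => ?_
    have := hH.laplaceTransform_eq_Gamma pos hz
    push_cast at this
    linear_combination -this
  rw [sub_eq_zero] at h₀ h₁ h₂ h₃
  refine ⟨6 * c, M / 6, by positivity, bigO₀.congr_left fun a => ?_, bigO₁.congr_left fun a => ?_,
    bigO₂.congr_left fun a => ?_⟩ <;> simp only [h₀, h₁, h₂, h₃, limitCubic] <;> ring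

end ChainAsymptotics

section ExponentialScales

open Asymptotics

variable {f g : ℝ → ℝ}

/-- `f(s) = O(e^{-δ s})` as `s → -∞`, for every `δ > 0`. -/
def IsSubexponential (f : ℝ → ℝ) : Prop :=
  ∀ ⦃δ : ℝ⦄, 0 < δ → f =O[atBot] fun s => exp (-(δ * s))

/-- `f(s) = O(e^{c s})` as `s → -∞`, for some `c > 0`. These functions form an ideal in the ring of
subexponential functions, and identities below are used modulo this ideal. -/
def IsExpSmall (f : ℝ → ℝ) : Prop := ∃ c : ℝ, 0 < c ∧ f =O[atBot] fun s => exp (c * s)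

lemma exp_mul_isBigO_of_le {c d : ℝ} (h : c ≤ d) :
    (fun s => exp (d * s)) =O[atBot] fun s => exp (c * s) := by
  refine .of_bound 1 ((eventually_le_atBot 0).mono fun s hs => ?_)
  simpa only [norm_eq_abs, abs_exp, one_mul, exp_le_exp] using mul_le_mul_of_nonpos_right h hs

namespace IsSubexponential

lemma of_isBigO_one (h : f =O[atBot] fun _ => (1 : ℝ)) : IsSubexponential f := fun δ hδ => by
  simpa only [neg_mul] using (h.congr_right fun s => by simp).trans
    (exp_mul_isBigO_of_le (c := -δ) (d := 0) (by linarith))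

lemma of_tendsto {l : ℝ} (h : Tendsto f atBot (𝓝 l)) : IsSubexponential f :=
  of_isBigO_one (h.isBigO_one ℝ)

lemma const (c : ℝ) : IsSubexponential fun _ => c :=
  of_tendsto tendsto_const_nhds

lemma exp_of_tendsto_div (h : Tendsto (fun s => f s / s) atBot (𝓝 0)) :
    IsSubexponential fun s => exp (f s) := fun δ hδ => by
  refine .of_bound 1 ((eventually_abs_le_of_tendsto_div h hδ).mono fun s hs => ?_)
  simpa only [norm_eq_abs, abs_exp, one_mul, exp_le_exp] using (le_abs_self _).trans hs

lemma neg (hf : IsSubexponential f) : IsSubexponential fun s => -f s :=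
  fun _ hδ => (hf hδ).neg_left

lemma add (hf : IsSubexponential f) (hg : IsSubexponential g) :
    IsSubexponential fun s => f s + g s :=
  fun _ hδ => (hf hδ).add (hg hδ)

lemma sub (hf : IsSubexponential f) (hg : IsSubexponential g) :
    IsSubexponential fun s => f s - g s :=
  fun _ hδ => (hf hδ).sub (hg hδ)

lemma mul (hf : IsSubexponential f) (hg : IsSubexponential g) :
    IsSubexponential fun s => f s * g s := fun δ hδ => by
  refine ((hf (half_pos hδ)).mul (hg (half_pos hδ))).congr_right fun s => ?_
  rw [← exp_add]
  ring_nf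

lemma pow (hf : IsSubexponential f) (n : ℕ) : IsSubexponential fun s => f s ^ n := by
  induction n with
  | zero => simpa only [pow_zero] using const 1
  | succ n ih => simpa only [pow_succ] using ih.mul hf

lemma id : IsSubexponential fun s => s := fun δ hδ => by
  have : (fun t => t) =O[atTop] fun t => exp (δ * t) := by
    simpa using (isLittleO_pow_exp_pos_mul_atTop 1 hδ).isBigO
  refine (this.comp_tendsto tendsto_neg_atBot_atTop).neg_left.congr (fun s => ?_) fun s => ?_
  · exact neg_neg s
  · simp only [Function.comp_apply, mul_neg]

end IsSubexponential

namespace IsExpSmall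

lemma congr (hf : IsExpSmall f) (h : f =ᶠ[atBot] g) : IsExpSmall g :=
  hf.imp fun _ => And.imp_right fun bigO => bigO.congr' h .rfl

lemma add (hf : IsExpSmall f) (hg : IsExpSmall g) : IsExpSmall fun s => f s + g s := by
  obtain ⟨c, hc, bigO_f⟩ := hf
  obtain ⟨d, hd, bigO_g⟩ := hg
  exact ⟨min c d, lt_min hc hd, (bigO_f.trans (exp_mul_isBigO_of_le (min_le_left _ _))).add
    (bigO_g.trans (exp_mul_isBigO_of_le (min_le_right _ _)))⟩

lemma mul (hf : IsExpSmall f) (hg : IsSubexponential g) : IsExpSmall fun s => f s * g s := by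
  obtain ⟨c, hc, bigO_f⟩ := hf
  refine ⟨c / 2, half_pos hc, (bigO_f.mul (hg (half_pos hc))).congr_right fun s => ?_⟩
  rw [← exp_add]
  ring_nf

lemma mul_const (hf : IsExpSmall f) (c : ℝ) : IsExpSmall fun s => f s * c :=
  hf.mul (.const c)

lemma tendsto (hf : IsExpSmall f) : Tendsto f atBot (𝓝 0) :=
  let ⟨_, hc, bigO⟩ := hf
  bigO.trans_tendsto (tendsto_exp_mul_atBot hc)

lemma of_isBigO_comp_add {c : ℝ} (hc : 0 < c) (bigO : f =O[atBot] fun a => exp (c * a)) (x : ℝ) :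
    IsExpSmall fun s => f (s + x) := by
  refine ⟨c, hc, (bigO.comp_tendsto (tendsto_atBot_add_const_right _ x tendsto_id)).trans
    (.of_bound (exp (c * x)) (.of_forall fun s => ?_))⟩
  simp only [Function.comp_apply, id, norm_eq_abs, abs_exp, ← exp_add]
  exact (congrArg exp (by ring)).le

lemma coeffs_of_forall_cubic {A B C D : ℝ → ℝ}
    (h : ∀ x : ℝ, IsExpSmall fun s => A s + B s * x + C s * x ^ 2 + D s * x ^ 3) :
    IsExpSmall A ∧ IsExpSmall B ∧ IsExpSmall C ∧ IsExpSmall D := by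
  have at_zero := h 0
  have at_one := h 1
  have at_neg_one := h (-1)
  have at_two := h 2
  refine ⟨at_zero.congr (.of_forall fun s => ?_),
    ((((at_one.add (at_zero.mul_const (-1 / 2))).add (at_neg_one.mul_const (-1 / 3))).add
      (at_two.mul_const (-1 / 6)))).congr (.of_forall fun s => ?_),
    (((at_one.mul_const (1 / 2)).add (at_neg_one.mul_const (1 / 2))).add
      (at_zero.mul_const (-1))).congr (.of_forall fun s => ?_),
    ((((at_two.mul_const (1 / 6)).add (at_one.mul_const (-1 / 2))).add
      (at_zero.mul_const (1 / 2))).add (at_neg_one.mul_const (-1 / 6))).congr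
        (.of_forall fun s => ?_)⟩ <;> ring

end IsExpSmall

end ExponentialScales

section LightConeBounds

open Asymptotics

/-- `f(a, b) = O(e^{p a + q b})` as the light-cone variables `a` and `b` tend to `-∞`
independently. -/
def HasExpOrder (f : ℝ → ℝ → ℝ) (p q : ℝ) : Prop :=
  (fun x : ℝ × ℝ => f x.1 x.2) =O[atBot ×ˢ atBot] fun x => exp (p * x.1 + q * x.2)

namespace HasExpOrder

variable {f g : ℝ → ℝ → ℝ} {p q p' q' : ℝ}

lemma add (hf : HasExpOrder f p q) (hg : HasExpOrder g p q) :
    HasExpOrder (fun a b => f a b + g a b) p q :=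
  IsBigO.add hf hg

lemma neg (hf : HasExpOrder f p q) : HasExpOrder (fun a b => -f a b) p q :=
  IsBigO.neg_left hf

lemma mul (hf : HasExpOrder f p q) (hg : HasExpOrder g p' q') :
    HasExpOrder (fun a b => f a b * g a b) (p + p') (q + q') :=
  (IsBigO.mul hf hg).congr_right fun x => by rw [← exp_add]; ring_nf

lemma mono (hf : HasExpOrder f p q) (hp : p' ≤ p) (hq : q' ≤ q) : HasExpOrder f p' q' := by
  refine hf.trans (.of_bound 1 ?_)
  filter_upwards [(eventually_le_atBot 0).prod_mk (eventually_le_atBot 0)] with x hx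
  simp only [norm_eq_abs, abs_exp, one_mul, exp_le_exp]
  exact add_le_add (mul_le_mul_of_nonpos_right hp hx.1) (mul_le_mul_of_nonpos_right hq hx.2)

lemma of_isBigO_left {h : ℝ → ℝ} (bigO : h =O[atBot] fun a => exp (p * a)) :
    HasExpOrder (fun a _ => h a) p 0 :=
  (bigO.comp_tendsto tendsto_fst).congr_right fun x => by
    simp only [Function.comp_apply, zero_mul, add_zero]

lemma of_isBigO_midpoint {h : ℝ → ℝ} {c : ℝ} (bigO : h =O[atBot] fun s => exp (2 * c * s)) :
    HasExpOrder (fun a b => h ((a + b) / 2)) c c := by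
  have lim : Tendsto (fun x : ℝ × ℝ => (x.1 + x.2) / 2) (atBot ×ˢ atBot) atBot :=
    (tendsto_fst.atBot_add_atBot tendsto_snd).atBot_div_const two_pos
  exact (bigO.comp_tendsto lim).congr_right fun x => congrArg exp (by ring)

lemma of_hasDerivAt {f' : ℝ → ℝ → ℝ} (hf' : HasExpOrder f' p q) (hq : 0 < q)
    (hasDerivAt : ∀ a b, HasDerivAt (f a) (f' a b) b) (lim : ∀ a, Tendsto (f a) atBot (𝓝 0)) :
    HasExpOrder f p q := by
  obtain ⟨K, hK⟩ := IsBigO.bound hf'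
  obtain ⟨P, hP, Q, hQ, le⟩ := eventually_prod_iff.1 hK
  obtain ⟨b₀, hb₀⟩ := eventually_atBot.1 hQ
  refine .of_bound (K / q) ?_
  filter_upwards [hP.prod_mk (eventually_le_atBot b₀)] with x hx
  have deriv_le : ∀ b ≤ b₀, |f' x.1 b| ≤ K * exp (p * x.1) * exp (q * b) := fun b hb => by
    simpa only [norm_eq_abs, exp_add, abs_mul, abs_exp, mul_assoc] using le hx.1 (hb₀ b hb)
  have := abs_sub_le_of_abs_deriv_le_exp hq (hasDerivAt x.1) deriv_le (lim x.1) x.2 hx.2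
  rw [sub_zero] at this
  rw [norm_eq_abs, norm_eq_abs, abs_exp, exp_add]
  exact this.trans_eq (by ring)

lemma isExpSmall_diagonal (hf : HasExpOrder f p q) (h : 0 < p + q) (x : ℝ) :
    IsExpSmall fun s => f (s + x) (s - x) := by
  have lim : Tendsto (fun s => (s + x, s - x)) atBot (atBot ×ˢ atBot) :=
    (tendsto_atBot_add_const_right _ x tendsto_id).prodMk
      (tendsto_atBot_add_const_right _ (-x) tendsto_id)
  refine ⟨p + q, h, (IsBigO.comp_tendsto hf lim).trans
    (.of_bound (exp ((p - q) * x)) (.of_forall fun s => ?_))⟩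
  simp only [Function.comp_apply, norm_eq_abs, abs_exp, ← exp_add]
  exact (congrArg exp (by ring)).le

end HasExpOrder

lemma IsSubexponential.hasExpOrder_midpoint {h : ℝ → ℝ} (hh : IsSubexponential h) {δ : ℝ}
    (hδ : 0 < δ) : HasExpOrder (fun a b => h ((a + b) / 2)) (-δ) (-δ) :=
  .of_isBigO_midpoint ((hh (mul_pos two_pos hδ)).congr_right fun s => congrArg exp (by ring))

end LightConeBounds

section DiagonalIdentity

open Asymptotics

namespace VertexProfile

variable {u v L N : ℝ → ℝ} (h : VertexProfile u v L N)
include h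

lemma isSubexponential_exp (c d : ℝ) : IsSubexponential fun s => exp (c * u s + d * v s) := by
  refine .exp_of_tendsto_div (((h.tendsto_u_div.const_mul c).add
    (h.tendsto_v_div.const_mul d)).congr (fun s => by ring) |>.trans (by simp))

lemma exp_affine_isBigO : (fun s => exp (8 * s + 2 * u s)) =O[atBot] fun s => exp (7 * s) := by
  refine .of_bound 1 ((eventually_atBot.2 h.exists_exp_affine_le).mono fun s hs => ?_)
  rwa [norm_eq_abs, norm_eq_abs, abs_exp, abs_exp, one_mul]

end VertexProfile

lemma IsCyclicChain.hasExpOrder {H : ℝ → Fin 4 → ℝ} (hH : IsCyclicChain H) (i : Fin 4) {δ : ℝ}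
    (hδ : 0 < δ) : HasExpOrder (fun a _ => H a i) (-δ) 0 :=
  .of_isBigO_left ((hH.isBigO_exp hδ i).congr_right fun a => by rw [neg_mul])

namespace IsVertexSection

variable {u v L N : ℝ → ℝ} {y : ℝ → ℝ → Fin 4 → ℝ} {H : ℝ → Fin 4 → ℝ}
  (hy : IsVertexSection u v y H) (hH : IsCyclicChain H) (h : VertexProfile u v L N)
include hy hH h

lemma hasExpOrder_zero : HasExpOrder (fun a b => y a b 0 - H a 0) (-1) (7 / 2) := by
  have y₃_order : HasExpOrder (fun a b => y a b 3) (-(1 / 2)) 0 := by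
    refine (IsBigO.of_norm_le fun x => ?_).trans (hH.hasExpOrder 3 one_half_pos)
    rw [norm_eq_abs, abs_of_nonneg (hy.nonneg ..)]
    exact hy.le_limit ..
  have exp_order : HasExpOrder (fun _ b => exp (4 * b)) 0 4 :=
    ((isBigO_refl (fun b => exp (4 * b)) atBot).comp_tendsto tendsto_snd).congr_right fun x => by
      simp only [Function.comp_apply, zero_mul, zero_add]
  have exp_u_order := (h.isSubexponential_exp 2 0).hasExpOrder_midpoint one_half_pos
  refine ((exp_order.mul exp_u_order).mul y₃_order).neg.mono (by norm_num) (by norm_num)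
    |>.of_hasDerivAt (by norm_num) (fun a b => ?_) fun a => ?_
  · convert! (hy.hasDerivAt_zero a b).sub_const (H a 0) using 1
    simp only [exp_add, zero_mul, add_zero]
  · simpa only [sub_self] using (hy.tendsto a 0).sub_const (H a 0)

lemma hasExpOrder_one :
    HasExpOrder (fun a b => y a b 1 - (H a 1 + L ((a + b) / 2) * H a 0)) (-(3 / 2)) 3 := by
  have U_order := (h.isSubexponential_exp (-2) 1).hasExpOrder_midpoint one_half_pos
  have E_order : HasExpOrder _ (7 / 2) (7 / 2) :=
    .of_isBigO_midpoint (h.exp_affine_isBigO.congr_right fun s => by norm_num)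
  refine ((U_order.mul (hy.hasExpOrder_zero hH h)).mono (p' := -(3 / 2)) (q' := 3) (by norm_num)
    (by norm_num)).add ((E_order.mul (hH.hasExpOrder 0 one_half_pos)).mono (by norm_num)
      (by norm_num)) |>.neg.of_hasDerivAt three_pos (fun a b => ?_) fun a => ?_
  · refine ((hy.hasDerivAt_one a b).sub (((hasDerivAt_comp_half_add_right
      (h.hasDerivAt_L _)).mul_const (H a 0)).const_add (H a 1))).congr_deriv ?_
    ring_nf
  · have mid_lim : Tendsto (fun b => (a + b) / 2) atBot atBot :=
      (tendsto_atBot_add_const_left _ a tendsto_id).atBot_div_const two_pos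
    simpa using (hy.tendsto a 1).sub
      (((h.tendsto_L.comp mid_lim).mul_const (H a 0)).const_add (H a 1))

lemma hasExpOrder_two : HasExpOrder (fun a b => y a b 2 - (H a 2 + N ((a + b) / 2) * H a 1 +
    ((N ((a + b) / 2) - L ((a + b) / 2)) * L ((a + b) / 2) +
      exp (v ((a + b) / 2) - 2 * u ((a + b) / 2))) * H a 0)) (-2) (5 / 2) := by
  have W_order := (h.isSubexponential_exp 2 (-2)).hasExpOrder_midpoint one_half_pos
  have E_order : HasExpOrder _ (7 / 2) (7 / 2) :=
    .of_isBigO_midpoint (h.exp_affine_isBigO.congr_right fun s => by norm_num)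
  have NL_order := ((IsSubexponential.of_tendsto h.tendsto_N).sub
    (.of_tendsto h.tendsto_L)).hasExpOrder_midpoint one_half_pos
  have H_order := ((hH.hasExpOrder 1 one_pos).mono (p' := -1) (q' := -(1 / 2)) le_rfl
    (by norm_num)).add ((NL_order.mul (hH.hasExpOrder 0 one_half_pos)).mono (by norm_num)
      (by norm_num))
  refine ((W_order.mul (hy.hasExpOrder_one hH h)).mono (p' := -2) (q' := 5 / 2) (by norm_num)
    (by norm_num)).add ((E_order.mul H_order).mono (by norm_num) (by norm_num))
      |>.neg.of_hasDerivAt (by norm_num) (fun a b => ?_) fun a => ?_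
  · have dL := hasDerivAt_comp_half_add_right (h.hasDerivAt_L ((a + b) / 2))
    have dN := hasDerivAt_comp_half_add_right (h.hasDerivAt_N ((a + b) / 2))
    have du := hasDerivAt_comp_half_add_right (h.hasDerivAt_u ((a + b) / 2))
    have dv := hasDerivAt_comp_half_add_right (h.hasDerivAt_v ((a + b) / 2))
    refine ((hy.hasDerivAt_two a b).sub (((dN.mul_const (H a 1)).const_add (H a 2)).fun_add
      ((((dN.fun_sub dL).fun_mul dL).fun_add (dv.fun_sub (du.const_mul 2)).exp).mul_const
        (H a 0)))).congr_deriv ?_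
    ring_nf
  · have mid_lim : Tendsto (fun b => (a + b) / 2) atBot atBot :=
      (tendsto_atBot_add_const_left _ a tendsto_id).atBot_div_const two_pos
    have L_lim := h.tendsto_L.comp mid_lim
    have N_lim := h.tendsto_N.comp mid_lim
    have U_lim := h.tendsto_exp_v_sub.comp mid_lim
    simpa using (hy.tendsto a 2).sub (((N_lim.mul_const (H a 1)).const_add (H a 2)).add
      ((((N_lim.sub L_lim).mul L_lim).add U_lim).mul_const (H a 0)))

end IsVertexSection

end DiagonalIdentity

section Matching

lemma VertexProfile.exists_forall_isExpSmall {u v L N : ℝ → ℝ} (h : VertexProfile u v L N)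
    {p : ℝ} (hp : p = log 4 - eulerMascheroniConstant) : ∃ α, ∀ x : ℝ, IsExpSmall fun s =>
      6 * (s - p + x) - N s * (3 * (s - p + x) ^ 2 + α)
        + ((N s - L s) * L s + exp (v s - 2 * u s)) * limitCubic α (s - p + x)
        + exp (u s - v s) * (3 * (s - p - x) ^ 2 + α - L s * limitCubic α (s - p - x)) := by
  obtain ⟨y, H, hy, hH, pos⟩ := h.exists_isVertexSection
  obtain ⟨α, κ, κ_pos, bigO₀, bigO₁, bigO₂⟩ := hH.exists_isBigO_limitCubic pos hp
  have sL := IsSubexponential.of_tendsto h.tendsto_L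
  have sN := IsSubexponential.of_tendsto h.tendsto_N
  have sρ := h.isSubexponential_exp 1 (-1)
  have sΘ := ((sN.sub sL).mul sL).add (.of_tendsto h.tendsto_exp_v_sub)
  refine ⟨α, fun x => ?_⟩
  have y₂_small := (hy.hasExpOrder_two hH h).isExpSmall_diagonal (by norm_num) x
  have y₁_small := (hy.hasExpOrder_one hH h).isExpSmall_diagonal (by norm_num) (-x)
  have shift {f : ℝ → ℝ} := IsExpSmall.of_isBigO_comp_add (f := f) three_pos
  have left_small := ((shift bigO₂ x).add ((shift bigO₁ x).mul sN)).add ((shift bigO₀ x).mul sΘ)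
  have right_small := ((shift bigO₁ (-x)).add ((shift bigO₀ (-x)).mul sL)).mul sρ.neg
  have combined := ((y₂_small.add (y₁_small.mul sρ.neg)).add (left_small.add right_small)).mul_const
    κ⁻¹
  refine combined.congr (.of_forall fun s => ?_)
  have symm := hy.two_eq (s + x) (s - x)
  have midpoint : (s + x + (s - x)) / 2 = s := by ring
  have midpoint' : (s - x + (s + x)) / 2 = s := by ring
  rw [midpoint] at symm
  have exponent : 1 * u s + -1 * v s = u s - v s := by ring
  simp only [midpoint, midpoint', symm, exponent, ← sub_eq_add_neg, sub_neg_eq_add,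
    sub_right_comm s _ p, add_sub_right_comm s x p]
  field_simp
  ring

variable {L N U ρ σ : ℝ → ℝ} {α : ℝ}

lemma isExpSmall_relations (sσ : IsSubexponential σ)
    (matching : ∀ x : ℝ, IsExpSmall fun s => 6 * (σ s + x) - N s * (3 * (σ s + x) ^ 2 + α)
      + ((N s - L s) * L s + U s) * limitCubic α (σ s + x)
      + ρ s * (3 * (σ s - x) ^ 2 + α - L s * limitCubic α (σ s - x))) :
    IsExpSmall (fun s => (N s - L s) * L s + U s + ρ s * L s) ∧
    IsExpSmall (fun s => σ s * (N s + ρ s) - 1) ∧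
    IsExpSmall (fun s => ρ s * σ s * (1 - σ s * L s) - 1 / 2) ∧
    IsExpSmall (fun s => 6 * σ s + ρ s * L s * (4 * σ s ^ 3 - zetaThree / 4)) := by
  let Θ : ℝ → ℝ := fun s => (N s - L s) * L s + U s
  obtain ⟨const_small, linear_small, quadratic_small, cubic_small⟩ :=
    IsExpSmall.coeffs_of_forall_cubic
      (A := fun s => 6 * σ s + (ρ s - N s) * (3 * σ s ^ 2 + α)
        + (Θ s - ρ s * L s) * limitCubic α (σ s))
      (B := fun s => 6 - 6 * σ s * (N s + ρ s) + (Θ s + ρ s * L s) * (3 * σ s ^ 2 + α))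
      (C := fun s => 3 * (ρ s - N s) + 3 * σ s * (Θ s - ρ s * L s))
      (D := fun s => Θ s + ρ s * L s)
      fun x => (matching x).congr (.of_forall fun s => by simp only [limitCubic, Θ]; ring)
  have s_deriv : IsSubexponential fun s => 3 * σ s ^ 2 + α :=
    ((IsSubexponential.const 3).mul (sσ.pow 2)).add (.const α)
  have s_cubic : IsSubexponential fun s => limitCubic α (σ s) :=
    ((sσ.pow 3).add ((IsSubexponential.const α).mul sσ)).add (.const _)
  have N_sub_ρ : IsExpSmall fun s => N s - ρ s * (1 - 2 * σ s * L s) :=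
    ((quadratic_small.mul_const (-1 / 3)).add (cubic_small.mul sσ)).congr (.of_forall fun s => by
      ring)
  have σ_mul : IsExpSmall fun s => σ s * (N s + ρ s) - 1 :=
    ((linear_small.mul_const (-1 / 6)).add ((cubic_small.mul s_deriv).mul_const (1 / 6))).congr
      (.of_forall fun s => by ring)
  refine ⟨cubic_small, σ_mul, ?_, ?_⟩
  · exact ((σ_mul.add (N_sub_ρ.mul sσ.neg)).mul_const (1 / 2)).congr (.of_forall fun s => by ring)
  · exact ((const_small.add (N_sub_ρ.mul s_deriv)).add (cubic_small.mul s_cubic.neg)).congr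
      (.of_forall fun s => by simp only [limitCubic]; ring)

lemma isExpSmall_cubic_and_quartic (sL : IsSubexponential L) (sN : IsSubexponential N)
    (sρ : IsSubexponential ρ) (sρ_inv : IsSubexponential fun s => (ρ s)⁻¹) (hρ : ∀ s, ρ s ≠ 0)
    (sσ : IsSubexponential σ)
    (matching : ∀ x : ℝ, IsExpSmall fun s => 6 * (σ s + x) - N s * (3 * (σ s + x) ^ 2 + α)
      + ((N s - L s) * L s + U s) * limitCubic α (σ s + x)
      + ρ s * (3 * (σ s - x) ^ 2 + α - L s * limitCubic α (σ s - x))) :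
    IsExpSmall (fun s => ρ s * U s * (4 * σ s ^ 3 + zetaThree / 8) + 3) ∧
    IsExpSmall (fun s => ρ s * σ s * (zetaThree / 8 - 2 * σ s ^ 3)
      - (4 * σ s ^ 3 + zetaThree / 8) / 2) := by
  obtain ⟨U_small, σ_small, ρσ_small, σ_L_small⟩ := isExpSmall_relations sσ matching
  have s_cubic : IsSubexponential fun s => 4 * σ s ^ 3 + zetaThree / 8 :=
    ((IsSubexponential.const 4).mul (sσ.pow 3)).add (.const _)
  have L_small : IsExpSmall fun s => L s * (4 * σ s ^ 3 + zetaThree / 8) - 6 * σ s ^ 2 := by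
    refine ((σ_L_small.add (ρσ_small.mul (sσ.mul (.const 12)))).mul
      (sρ_inv.mul (.const (-1 / 2)))).congr (.of_forall fun s => ?_)
    field_simp [hρ s]
    ring
  constructor
  · exact (((U_small.mul (sρ.mul s_cubic)).add (L_small.mul (sρ.mul ((sN.sub sL).add sρ)).neg)).add
      (σ_small.mul ((sσ.mul sρ).mul (.const (-6))))).add (ρσ_small.mul_const (-6)) |>.congr
        (.of_forall fun s => by ring)
  · exact ((ρσ_small.mul s_cubic).add (L_small.mul (sρ.mul (sσ.pow 2)))).congr
      (.of_forall fun s => by ring)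

lemma tendsto_sub_log {f g : ℝ → ℝ} (h : Tendsto (fun s => exp (-f s) * g s) atBot (𝓝 1)) :
    Tendsto (fun s => f s - log (g s)) atBot (𝓝 0) := by
  have log_lim := (h.log one_ne_zero).neg
  rw [log_one, neg_zero] at log_lim
  refine log_lim.congr' ((h.eventually_ne one_ne_zero).mono fun s hs => ?_)
  rw [log_mul (exp_pos _).ne' (right_ne_zero_of_mul hs), log_exp]
  ring

theorem VertexProfile.tendsto_sub_log_P3V1_and_P4V1 {u v L N : ℝ → ℝ}
    (h : VertexProfile u v L N) :
    Tendsto (fun s => u s - log (P3V1 s)) atBot (𝓝 0) ∧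
    Tendsto (fun s => v s - log (P4V1 s)) atBot (𝓝 0) := by
  let σ : ℝ → ℝ := fun s => s - (log 4 - eulerMascheroniConstant)
  obtain ⟨α, matching⟩ := h.exists_forall_isExpSmall rfl
  have s_exp (c d : ℝ) := h.isSubexponential_exp c d
  have s_inv : IsSubexponential fun s => (exp (u s - v s))⁻¹ := by
    simpa [← exp_neg, sub_eq_add_neg, add_comm] using s_exp (-1) 1
  obtain ⟨cubic, quartic⟩ := isExpSmall_cubic_and_quartic (σ := σ)
    (.of_tendsto h.tendsto_L) (.of_tendsto h.tendsto_N)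
    (by simpa [sub_eq_add_neg] using s_exp 1 (-1)) s_inv (fun s => (exp_pos _).ne')
    (IsSubexponential.id.sub (.const _)) matching
  have exp_u (s : ℝ) : exp (-u s) = exp (u s - v s) * exp (v s - 2 * u s) := by
    rw [← exp_add]; ring_nf
  have exp_v (s : ℝ) : exp (-v s) = exp (u s - v s) * exp (-u s) := by
    rw [← exp_add]; ring_nf
  have P3_lim : Tendsto (fun s => exp (-u s) * P3V1 s) atBot (𝓝 1) := by
    refine ((cubic.tendsto.const_mul (-1 / 3)).add_const 1).congr (fun s => ?_) |>.trans (by simp)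
    simp only [exp_u, P3V1, σ]
    ring
  have P4_lim : Tendsto (fun s => exp (-v s) * P4V1 s) atBot (𝓝 1) := by
    refine (((quartic.mul (s_exp (-1) 0)).tendsto.const_mul (-2 / 3)).add P3_lim).congr
      (fun s => ?_) |>.trans (by simp)
    simp only [exp_v, P3V1, P4V1, σ, zero_mul, add_zero, neg_one_mul]
    ring
  exact ⟨tendsto_sub_log P3_lim, tendsto_sub_log P4_lim⟩

end Matching

section LogarithmicVariable

variable {w w0 w1 : ℝ → ℝ}

lemma hasDerivAt_comp_exp (hw : ContDiffOn ℝ 2 w (Set.Ioi 0)) (s : ℝ) :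
    HasDerivAt (fun s => w (exp s)) (exp s * deriv w (exp s)) s := by
  have hasDerivAt := ((hw.contDiffAt (Ioi_mem_nhds (exp_pos s))).differentiableAt
    two_ne_zero).hasDerivAt
  exact (hasDerivAt.comp s (hasDerivAt_exp s)).congr_deriv (mul_comm ..)

lemma hasDerivAt_exp_mul_deriv_comp_exp (hw : ContDiffOn ℝ 2 w (Set.Ioi 0)) (s : ℝ) :
    HasDerivAt (fun s => exp s * deriv w (exp s)) (2 * (exp (2 * s) *
      (1 / 2 * deriv (deriv w) (exp s) + 1 / (2 * exp s) * deriv w (exp s)))) s := by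
  have deriv_contDiffOn : ContDiffOn ℝ 1 (deriv w) (Set.Ioi 0) :=
    hw.deriv_of_isOpen isOpen_Ioi (by norm_num)
  have hasDerivAt := ((deriv_contDiffOn.contDiffAt (Ioi_mem_nhds (exp_pos s))).differentiableAt
    one_ne_zero).hasDerivAt
  refine ((hasDerivAt_exp s).mul (hasDerivAt.comp s (hasDerivAt_exp s))).congr_deriv ?_
  rw [two_mul s, exp_add]
  simp only [Function.comp_apply]
  field_simp
  ring

lemma VertexProfile.of_isRadialTTStar (hw0 : ContDiffOn ℝ 2 w0 (Set.Ioi 0))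
    (hw1 : ContDiffOn ℝ 2 w1 (Set.Ioi 0)) (hsol : IsRadialTTStar w0 w1)
    (hγ0lim : Tendsto (fun r => 2 * w0 r / log r) (𝓝[>] 0) (𝓝 3))
    (hγ1lim : Tendsto (fun r => 2 * w1 r / log r) (𝓝[>] 0) (𝓝 1)) :
    VertexProfile (fun s => 2 * w0 (exp s) - 3 * s)
      (fun s => 2 * w0 (exp s) + 2 * w1 (exp s) - 4 * s)
      (fun s => exp s * deriv w0 (exp s) - 3 / 2)
      (fun s => exp s * deriv w0 (exp s) + exp s * deriv w1 (exp s) - 2) where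
  hasDerivAt_u s := (((hasDerivAt_comp_exp hw0 s).const_mul 2).sub
    ((hasDerivAt_id s).const_mul 3)).congr_deriv (by ring)
  hasDerivAt_v s := ((((hasDerivAt_comp_exp hw0 s).const_mul 2).add
    ((hasDerivAt_comp_exp hw1 s).const_mul 2)).sub ((hasDerivAt_id s).const_mul 4)).congr_deriv
      (by ring)
  hasDerivAt_L s := by
    refine ((hasDerivAt_exp_mul_deriv_comp_exp hw0 s).sub_const _).congr_deriv ?_
    rw [(hsol _ (exp_pos s)).1, mul_sub, ← exp_add, ← exp_add]
    ring_nf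
  hasDerivAt_N s := by
    refine (((hasDerivAt_exp_mul_deriv_comp_exp hw0 s).add
      (hasDerivAt_exp_mul_deriv_comp_exp hw1 s)).sub_const _).congr_deriv ?_
    rw [(hsol _ (exp_pos s)).1, (hsol _ (exp_pos s)).2, ← mul_add, ← mul_add, sub_add_sub_cancel,
      mul_sub, ← exp_add, ← exp_add]
    ring_nf
  tendsto_u_div := by
    have lim := (hγ0lim.comp tendsto_exp_atBot_nhdsGT).sub_const 3
    rw [sub_self] at lim
    refine lim.congr' ((eventually_ne_atBot 0).mono fun s hs => ?_)
    simp only [Function.comp_apply, log_exp]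
    field_simp
  tendsto_v_div := by
    have lim := ((hγ0lim.add hγ1lim).comp tendsto_exp_atBot_nhdsGT).sub_const 4
    norm_num only at lim
    refine lim.congr' ((eventually_ne_atBot 0).mono fun s hs => ?_)
    simp only [Function.comp_apply, log_exp]
    field_simp

end LogarithmicVariable

theorem fine_structure_V1_case_general (w0 w1 : ℝ → ℝ)
    (hw0 : ContDiffOn ℝ 2 w0 (Set.Ioi 0)) (hw1 : ContDiffOn ℝ 2 w1 (Set.Ioi 0))
    (hsol : IsRadialTTStar w0 w1)
    (hγ0lim : Tendsto (fun r => 2 * w0 r / log r) (𝓝[>] 0) (𝓝 3))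
    (hγ1lim : Tendsto (fun r => 2 * w1 r / log r) (𝓝[>] 0) (𝓝 1)) :
    Tendsto (fun r => 2 * w0 r - 3 * log r - log (P3V1 (log r))) (𝓝[>] 0) (𝓝 0) ∧
    Tendsto (fun r => 2 * w0 r + 2 * w1 r - 4 * log r - log (P4V1 (log r))) (𝓝[>] 0) (𝓝 0) := by
  obtain ⟨P3_lim, P4_lim⟩ := (VertexProfile.of_isRadialTTStar hw0 hw1 hsol hγ0lim
    hγ1lim).tendsto_sub_log_P3V1_and_P4V1
  refine ⟨(P3_lim.comp tendsto_log_nhdsGT_zero).congr' ?_,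
    (P4_lim.comp tendsto_log_nhdsGT_zero).congr' ?_⟩ <;>
  · refine eventually_mem_nhdsWithin.mono fun r (hr : 0 < r) => ?_
    simp only [Function.comp_apply, exp_log hr]

/-- Fine structure near `r = 0` in the vertex case V1, `(γ0, γ1) = (3, 1)`: with `s = ln r`,
`2 w0(r) − 3 ln r − ln P3(s) → 0` and `2 w0(r) + 2 w1(r) − 4 ln r − ln P4(s) → 0`
as `r → 0⁺`. -/
theorem fine_structure_V1_case (w0 w1 : ℝ → ℝ)
    (hsmooth0 : ContDiffOn ℝ (⊤ : ℕ∞) w0 (Set.Ioi 0)) (hsmooth1 : ContDiffOn ℝ (⊤ : ℕ∞) w1 (Set.Ioi 0))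
    (hsol : IsRadialTTStar w0 w1)
    (hlim0 : Tendsto w0 atTop (nhds 0)) (hlim1 : Tendsto w1 atTop (nhds 0))
    (hγ0lim : Tendsto (fun r => 2 * w0 r / Real.log r) (nhdsWithin 0 (Set.Ioi 0)) (nhds 3))
    (hγ1lim : Tendsto (fun r => 2 * w1 r / Real.log r) (nhdsWithin 0 (Set.Ioi 0)) (nhds 1)) :
    Tendsto (fun r => 2 * w0 r - 3 * Real.log r - Real.log (P3V1 (Real.log r)))
        (nhdsWithin 0 (Set.Ioi 0)) (nhds 0) ∧
    Tendsto (fun r => 2 * w0 r + 2 * w1 r - 4 * Real.log r - Real.log (P4V1 (Real.log r)))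
        (nhdsWithin 0 (Set.Ioi 0)) (nhds 0) :=
  fine_structure_V1_case_general w0 w1 (contDiffOn_infty.1 hsmooth0 2)
    (contDiffOn_infty.1 hsmooth1 2) hsol hγ0lim hγ1lim
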